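/- Let n ≥ 3 and let (ψ_j)_{j∈S} be a sequence of smooth ℤⁿ-periodic real-valued eigenfunctions of the Euclidean Laplacian on ℝⁿ with eigenvalues λ_j → ∞ and ∫_{[0,1)ⁿ} ψ_j² dx = 1, such that for some R₀ > 0, for every r ∈ (0, R₀) and every x ∈ ℝⁿ, ∫_{B_r(x)} ψ_j² dx → Vol(B_r(x)) as j → ∞. Then λ_j^{1/2+(n-1)(n-2)/(4n)} · inf{in(Ω) : Ω a nodal domain of ψ_j} → ∞ as j → ∞. -/

import Mathlib

open MeasureTheory Metric Filter Real

noncomputable section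

/-- `ψ : ℝⁿ → ℝ` is `ℤⁿ`-periodic: `ψ (x + v) = ψ x` for every integer vector `v`. -/
def ZnPeriodic (n : ℕ) (ψ : EuclideanSpace ℝ (Fin n) → ℝ) : Prop :=
  ∀ (x : EuclideanSpace ℝ (Fin n)) (v : Fin n → ℤ),
    ψ (show EuclideanSpace ℝ (Fin n) from WithLp.toLp 2 fun i => x i + (v i : ℝ)) = ψ x

/-- The Euclidean Laplacian `Δψ = ∑ᵢ ∂²ψ/∂xᵢ²`. -/
def lap (n : ℕ) (ψ : EuclideanSpace ℝ (Fin n) → ℝ) (x : EuclideanSpace ℝ (Fin n)) : ℝ :=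
  ∑ i : Fin n,
    fderiv ℝ (fun y => fderiv ℝ ψ y (EuclideanSpace.single i (1:ℝ))) x
      (EuclideanSpace.single i (1:ℝ))

/-- `Ω` is a nodal domain of `ψ`: a connected component of `{ψ ≠ 0}`. -/
def IsNodalDomain {n : ℕ} (ψ : EuclideanSpace ℝ (Fin n) → ℝ)
    (Ω : Set (EuclideanSpace ℝ (Fin n))) : Prop :=
  ∃ x, ψ x ≠ 0 ∧ Ω = connectedComponentIn {y | ψ y ≠ 0} x

/-- The inner radius of a set: the supremum of radii of open balls contained in it. -/
def innerRadius {n : ℕ} (Ω : Set (EuclideanSpace ℝ (Fin n))) : ℝ :=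
  sSup {ρ : ℝ | 0 < ρ ∧ ∃ c, Metric.ball c ρ ⊆ Ω}

/-- The fundamental domain `[0,1)ⁿ` of the torus `ℝⁿ/ℤⁿ`. -/
def fundDom (n : ℕ) : Set (EuclideanSpace ℝ (Fin n)) :=
  {x | ∀ i, x i ∈ Set.Ico (0:ℝ) 1}

/-- `S ⊆ ℕ` has full density: `#(S ∩ [1,N]) / N → 1`. -/
def FullDensity (S : Set ℕ) : Prop :=
  Filter.Tendsto (fun N => (Nat.card ↥(S ∩ Set.Icc 1 N) : ℝ) / N) Filter.atTop (nhds 1)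

theorem rolle_chain (m : ℕ) : ∀ (g : ℕ → ℝ → ℝ) (_ : ∀ k t, HasDerivAt (g k) (g (k+1) t) t)
    (x : Fin (m+1) → ℝ) (_ : StrictMono x) (_ : ∀ i, g 0 (x i) = 0), ∃ c, g m c = 0 := by
  induction m with
  | zero => intro g _ x _ h; exact ⟨x 0, h 0⟩
  | succ m ih =>
    intro g hg x hx h
    have : ∀ i : Fin (m+1), ∃ c ∈ Set.Ioo (x i.castSucc) (x i.succ), g 1 c = 0 := fun i =>
      exists_hasDerivAt_eq_zero (hx (Fin.castSucc_lt_succ))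
        (fun t _ => (hg 0 t).continuousAt.continuousWithinAt) (by rw [h, h]) (fun t _ => hg 0 t)
    choose y hy hy0 using this
    have hym : StrictMono y := by
      intro i j hij
      have h1 := (hy i).2
      have h2 := (hy j).1
      have h3 : x i.succ ≤ x j.castSucc := hx.monotone (by
        rw [Fin.le_def]; simp; exact hij)
      linarith
    exact ih (fun k => g (k+1)) (fun k t => hg (k+1) t) y hym hy0

theorem divdiff (m : ℕ) (f : ℕ → ℝ → ℝ) (hf : ∀ k t, HasDerivAt (f k) (f (k+1) t) t)
    (x : Fin (m+1) → ℝ) (hx : StrictMono x) :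
    ∃ c, f m c = (m.factorial : ℝ) * ∑ i, f 0 (x i) / ∏ j ∈ Finset.univ.erase i, (x i - x j) := by
  classical
  set Q := Lagrange.interpolate Finset.univ x (fun i => f 0 (x i)) with hQ
  have hinj : Set.InjOn x (Finset.univ : Finset (Fin (m+1))) := hx.injective.injOn
  have hdeg : Q.degree < (Finset.univ : Finset (Fin (m+1))).card := Lagrange.degree_interpolate_lt _ hinj
  obtain ⟨c, hc⟩ := rolle_chain m (fun k t => f k t - (Polynomial.derivative^[k] Q).eval t)
    (fun k t => by
      have := (Polynomial.derivative^[k] Q).hasDerivAt t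
      rw [← Function.iterate_succ_apply' (f := (Polynomial.derivative : Polynomial ℝ → Polynomial ℝ))] at this
      exact (hf k t).sub this) x hx (fun i => by
      simp only [Function.iterate_zero, id]
      rw [hQ, Lagrange.eval_interpolate_at_node _ hinj (Finset.mem_univ i), sub_self])
  refine ⟨c, ?_⟩
  have h1 := Lagrange.eval_iterate_derivative_eq_sum hinj hdeg (k := m) (by simp) c
  have h2 : f m c = (Polynomial.derivative^[m] Q).eval c := by linarith
  rw [h2, h1]
  congr 1
  apply Finset.sum_congr rfl
  intro i _
  rw [hQ, Lagrange.eval_interpolate_at_node _ hinj (Finset.mem_univ i)]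
  simp

theorem interp_bound (m : ℕ) (hm : 0 < m) (f : ℕ → ℝ → ℝ)
    (hf : ∀ k t, HasDerivAt (f k) (f (k+1) t) t) (B δ h T D : ℝ) (hB : ∀ t, |f m t| ≤ B)
    (hh : 0 < h) (hT : h ≤ T) (hTD : T ≤ D) 
    (hδ : ∀ t, 0 ≤ t → t ≤ h → |f 0 t| ≤ δ) :
    |f 0 T| ≤ D ^ m * (B / m.factorial + m * δ * (m / h) ^ m) := by
  classical
  have hmR : (0:ℝ) < m := by exact_mod_cast hm
  set x : Fin (m+1) → ℝ := Fin.snoc (fun i : Fin m => h * (i : ℕ) / m) T with hxdef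
  have hxc : ∀ i : Fin m, x i.castSucc = h * (i:ℕ) / m := fun i => by simp [hxdef]
  have hxl : x (Fin.last m) = T := by simp [hxdef]
  have hstep : 0 < h / m := by positivity
  have hlt : ∀ i : Fin m, h * (i:ℕ) / m + h / m ≤ h := fun i => by
    have : ((i:ℕ):ℝ) + 1 ≤ m := by exact_mod_cast i.2
    rw [← add_div, div_le_iff₀ hmR]; nlinarith
  have hgap : ∀ i j, i < j → h / m ≤ x j - x i := by
    intro i j hij
    induction i using Fin.lastCases with
    | last => exact absurd hij (by simp [Fin.le_last])
    | cast i =>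
      induction j using Fin.lastCases with
      | last => rw [hxl, hxc]; linarith [hlt i]
      | cast j =>
        rw [hxc, hxc]
        have : ((i:ℕ):ℝ) + 1 ≤ (j:ℕ) := by exact_mod_cast hij
        have e : h * ((j:ℕ):ℝ) / m - h * ((i:ℕ):ℝ) / m = (h / m) * ((j:ℕ) - (i:ℕ)) := by ring
        rw [e]; nlinarith
  have hx : StrictMono x := fun i j hij => by linarith [hgap i j hij]
  have hgap' : ∀ i j, i ≠ j → h / m ≤ |x i - x j| := by
    intro i j hij
    rcases lt_or_gt_of_ne hij with h1 | h1
    · rw [abs_sub_comm]; exact (hgap _ _ h1).trans (le_abs_self _)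
    · exact (hgap _ _ h1).trans (le_abs_self _)
  obtain ⟨c, hc⟩ := divdiff m f hf x hx
  rw [Fin.sum_univ_castSucc] at hc
  set W := ∏ j ∈ Finset.univ.erase (Fin.last m), (x (Fin.last m) - x j) with hW
  have hcard : ∀ i : Fin (m+1), (Finset.univ.erase i).card = m := fun i => by simp
  have hWpos : 0 < |W| := by
    rw [hW, Finset.abs_prod]
    apply Finset.prod_pos
    intro j hj
    exact lt_of_lt_of_le hstep (hgap' _ _ (Finset.ne_of_mem_erase hj).symm)
  have hWD : |W| ≤ D ^ m := by
    rw [hW, Finset.abs_prod]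
    have hb : ∀ j ∈ Finset.univ.erase (Fin.last m), |x (Fin.last m) - x j| ≤ D := by
      intro j hj
      induction j using Fin.lastCases with
      | last => simp at hj
      | cast j =>
        rw [hxl, hxc, abs_le]
        have := hlt j
        have h0 : 0 ≤ h * ((j:ℕ):ℝ) / m := by positivity
        constructor <;> linarith
    have := Finset.prod_le_prod (fun _ _ => abs_nonneg _) hb
    rwa [Finset.prod_const, hcard] at this
  have hδ0 : 0 ≤ δ := (abs_nonneg _).trans (hδ 0 le_rfl hh.le)
  have hterm : ∀ i : Fin m, |f 0 (x i.castSucc) / ∏ j ∈ Finset.univ.erase i.castSucc, (x i.castSucc - x j)|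
      ≤ δ * (m / h)^m := by
    intro i
    rw [abs_div, Finset.abs_prod]
    have h1 : (h/m)^m ≤ ∏ j ∈ Finset.univ.erase i.castSucc, |x i.castSucc - x j| := by
      have : ∏ j ∈ Finset.univ.erase i.castSucc, (h/m) ≤ ∏ j ∈ Finset.univ.erase i.castSucc, |x i.castSucc - x j| :=
        Finset.prod_le_prod (fun _ _ => hstep.le) (fun j hj => hgap' _ _ (Finset.ne_of_mem_erase hj).symm)
      rwa [Finset.prod_const, hcard] at this
    have h2 : |f 0 (x i.castSucc)| ≤ δ := by
      rw [hxc]; exact hδ _ (by positivity) (by linarith [hlt i])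
    calc _ ≤ δ / (h/m)^m := by gcongr
      _ = δ * (m/h)^m := by rw [div_eq_mul_inv, ← inv_pow, inv_div]
  have hsum : |∑ i : Fin m, f 0 (x i.castSucc) / ∏ j ∈ Finset.univ.erase i.castSucc, (x i.castSucc - x j)|
      ≤ m * δ * (m/h)^m := by
    refine (Finset.abs_sum_le_sum_abs _ _).trans ?_
    refine (Finset.sum_le_sum (fun i _ => hterm i)).trans ?_
    simp [mul_assoc]
  set Sg := ∑ i : Fin m, f 0 (x i.castSucc) / ∏ j ∈ Finset.univ.erase i.castSucc, (x i.castSucc - x j)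
  have hfac : (0:ℝ) < m.factorial := by exact_mod_cast m.factorial_pos
  have key : f 0 T / W = f m c / m.factorial - Sg := by
    rw [hc, hxl]; field_simp; ring
  have h3 : |f 0 T| / |W| ≤ B / m.factorial + m * δ * (m/h)^m := by
    rw [← abs_div, key]
    refine (abs_sub _ _).trans ?_
    have : |f m c / m.factorial| ≤ B / m.factorial := by
      rw [abs_div, abs_of_pos hfac]; gcongr; exact hB c
    linarith
  rw [div_le_iff₀ hWpos] at h3
  refine h3.trans ?_
  rw [mul_comm]
  have : 0 ≤ B / m.factorial + m * δ * (m/h)^m := by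
    have : 0 ≤ B := (abs_nonneg _).trans (hB 0)
    positivity
  gcongr

section torus
local instance qeInst1 : MeasureSpace UnitAddCircle := ⟨AddCircle.haarAddCircle⟩
local instance qeInst2 : Measure.IsAddHaarMeasure (volume : Measure UnitAddCircle) :=
  inferInstanceAs (Measure.IsAddHaarMeasure AddCircle.haarAddCircle)
local instance qeInst3 : IsProbabilityMeasure (volume : Measure UnitAddCircle) :=
  inferInstanceAs (IsProbabilityMeasure AddCircle.haarAddCircle)

def prT (n : ℕ) (x : EuclideanSpace ℝ (Fin n)) : UnitAddTorus (Fin n) := fun i => (x i : UnitAddCircle)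

theorem prT_quot (n : ℕ) : IsOpenQuotientMap (prT n) := by
  have h1 : IsOpenQuotientMap (Pi.map (fun (_ : Fin n) (x : ℝ) => (x : UnitAddCircle))) :=
    IsOpenQuotientMap.piMap (fun _ => QuotientAddGroup.isOpenQuotientMap_mk)
  have h2 : IsOpenQuotientMap (EuclideanSpace.equiv (Fin n) ℝ) :=
    (EuclideanSpace.equiv (Fin n) ℝ).toHomeomorph.isOpenQuotientMap
  exact h1.comp h2

theorem prT_eq {n : ℕ} {f : EuclideanSpace ℝ (Fin n) → ℝ} (hf : ∀ (x : EuclideanSpace ℝ (Fin n)) (v : Fin n → ℤ),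
    f (WithLp.toLp 2 fun i => x i + (v i : ℝ)) = f x) {x y} (h : prT n x = prT n y) : f x = f y := by
  have : ∀ i, ∃ m : ℤ, (m:ℝ) = x i - y i := by
    intro i
    have hi := congrFun h i
    simp only [prT] at hi
    have : ((x i - y i : ℝ) : UnitAddCircle) = 0 := by
      rw [AddCircle.coe_sub, hi, sub_self]
    rw [AddCircle.coe_eq_zero_iff] at this
    obtain ⟨m, hm⟩ := this
    exact ⟨m, by simpa using hm⟩
  choose v hv using this
  rw [← hf y v]
  congr 1
  ext i
  simp [hv]

theorem exists_liftT {n : ℕ} {f : EuclideanSpace ℝ (Fin n) → ℝ} (hf : ∀ (x : EuclideanSpace ℝ (Fin n)) (v : Fin n → ℤ),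
    f (WithLp.toLp 2 fun i => x i + (v i : ℝ)) = f x) (hc : Continuous f) :
    ∃ F : C(UnitAddTorus (Fin n), ℂ), ∀ x, F (prT n x) = (f x : ℂ) := by
  have hq := (prT_quot n)
  let g : C(EuclideanSpace ℝ (Fin n), ℂ) := ⟨fun x => (f x : ℂ), by fun_prop⟩
  let p : C(EuclideanSpace ℝ (Fin n), UnitAddTorus (Fin n)) := ⟨prT n, hq.continuous⟩
  have hp : Topology.IsQuotientMap p := hq.isQuotientMap
  refine ⟨hp.lift g ?_, fun x => ?_⟩
  · intro x y h
    show (f x : ℂ) = f y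
    rw [prT_eq hf h]
  · have := DFunLike.congr_fun (hp.lift_comp g (fun x y h => by
      show (f x : ℂ) = f y
      rw [prT_eq hf h])) x
    exact this

theorem mFourier_prT {n : ℕ} (k : Fin n → ℤ) (x : EuclideanSpace ℝ (Fin n)) :
    UnitAddTorus.mFourier k (prT n x) = Complex.exp ((2 * π * ∑ i, k i * x i : ℝ) * Complex.I) := by
  simp only [UnitAddTorus.mFourier, ContinuousMap.coe_mk, prT]
  rw [Finset.prod_congr rfl (fun i _ => fourier_coe_apply), ← Complex.exp_sum]
  congr 1
  push_cast
  rw [Finset.mul_sum, Finset.sum_mul]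
  apply Finset.sum_congr rfl
  intro i _
  ring

theorem mFourierCoeff_deriv {n : ℕ} (i : Fin n) (f f' : EuclideanSpace ℝ (Fin n) → ℝ)
    (F F' : C(UnitAddTorus (Fin n), ℂ)) (hF : ∀ x, F (prT n x) = (f x : ℂ))
    (hF' : ∀ x, F' (prT n x) = (f' x : ℂ))
    (hd : ∀ x, HasDerivAt (fun t : ℝ => f (x + t • EuclideanSpace.single i (1:ℝ))) (f' x) 0) (k : Fin n → ℤ) :
    UnitAddTorus.mFourierCoeff F' k = (2 * π * k i * Complex.I) * UnitAddTorus.mFourierCoeff F k := by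
  set e := EuclideanSpace.single i (1:ℝ) with he
  let G : ℝ → ℂ := fun t => ∫ τ, UnitAddTorus.mFourier (-k) τ • F (τ + prT n (t • e))
  have hadd : ∀ x y, prT n x + prT n y = prT n (x + y) := fun x y => by
    ext j; simp [prT]
  have hsub : ∀ x, - prT n x = prT n (-x) := fun x => by
    ext j; simp [prT]
  have hG1 : ∀ t, G t = Complex.exp ((2 * π * k i * Complex.I) * t) * UnitAddTorus.mFourierCoeff F k := by
    intro t
    have h1 : G t = ∫ τ, UnitAddTorus.mFourier (-k) (τ + prT n (t • e) - prT n (t • e)) • F (τ + prT n (t • e)) := by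
      simp only [G, add_sub_cancel_right]
    rw [h1, integral_add_right_eq_self (fun τ => UnitAddTorus.mFourier (-k) (τ - prT n (t • e)) • F τ)]
    rw [UnitAddTorus.mFourierCoeff, ← integral_const_mul]
    congr 1
    ext τ
    obtain ⟨x, rfl⟩ := (prT_quot n).surjective τ
    rw [sub_eq_add_neg, hsub, hadd, mFourier_prT, mFourier_prT, smul_eq_mul, smul_eq_mul, ← mul_assoc,
      ← Complex.exp_add]
    congr 2
    have : ∑ j, (((-k) j : ℤ):ℝ) * (x + -(t • e)) j = ∑ j, (((-k) j : ℤ):ℝ) * x j + k i * t := by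
      have : ∀ j, (((-k) j : ℤ):ℝ) * (x + -(t • e)) j = (((-k) j : ℤ):ℝ) * x j + (if j = i then k j * t else 0) := by
        intro j
        by_cases hj : j = i
        · subst hj; simp [he]; ring
        · simp [he, hj]
      simp_rw [this, Finset.sum_add_distrib]
      simp
    rw [this]
    push_cast
    ring
  have hG2 : HasDerivAt G (∫ τ, UnitAddTorus.mFourier (-k) τ • F' (τ + prT n ((0:ℝ) • e))) 0 := by
    have hcont : ∀ (H : C(UnitAddTorus (Fin n), ℂ)) (t : ℝ), Continuous (fun τ => UnitAddTorus.mFourier (-k) τ • H (τ + prT n (t • e))) := by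
      intro H t; fun_prop
    have hint : ∀ {g : UnitAddTorus (Fin n) → ℂ}, Continuous g → Integrable g := fun hg =>
      hg.integrable_of_hasCompactSupport (HasCompactSupport.of_compactSpace _)
    refine (hasDerivAt_integral_of_dominated_loc_of_deriv_le (μ := volume) (bound := fun _ => ‖F'‖) (s := Set.univ)
      (F := fun t τ => UnitAddTorus.mFourier (-k) τ • F (τ + prT n (t • e)))
      (F' := fun t τ => UnitAddTorus.mFourier (-k) τ • F' (τ + prT n (t • e)))
      (x₀ := (0:ℝ)) Filter.univ_mem ?_ ?_ ?_ ?_ ?_ ?_).2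
    · exact Eventually.of_forall fun t => (hcont F t).aestronglyMeasurable
    · exact hint (hcont F 0)
    · exact (hcont F' 0).aestronglyMeasurable
    · refine Eventually.of_forall fun τ t _ => ?_
      rw [norm_smul]
      have h1 : ‖UnitAddTorus.mFourier (-k) τ‖ ≤ 1 :=
        (ContinuousMap.norm_coe_le_norm _ τ).trans (UnitAddTorus.mFourier_norm).le
      have h2 := ContinuousMap.norm_coe_le_norm F' (τ + prT n (t • e))
      nlinarith [norm_nonneg (F' (τ + prT n (t • e)))]
    · exact integrable_const _
    · refine Eventually.of_forall fun τ t _ => ?_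
      obtain ⟨x, rfl⟩ := (prT_quot n).surjective τ
      simp only [hadd, hF, hF']
      simp only [smul_eq_mul]
      apply HasDerivAt.const_mul
      apply HasDerivAt.ofReal_comp
      have h1 := hd (x + t • e)
      have h2 : HasDerivAt (fun u : ℝ => f (x + t • e + (u - t) • e)) (f' (x + t • e)) t := by
        exact HasDerivAt.comp_sub_const (f := fun u : ℝ => f (x + t • e + u • e)) t t (by simpa using h1)
      convert h2 using 2 with u
      congr 1
      module
  have hG3 : HasDerivAt G ((2 * π * k i * Complex.I) * UnitAddTorus.mFourierCoeff F k) 0 := by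
    have hh : HasDerivAt (fun t : ℝ => Complex.exp ((2 * π * k i * Complex.I) * (t:ℂ))) (2 * π * k i * Complex.I) 0 := by
      have := ((hasDerivAt_id (0:ℂ)).const_mul (2 * π * k i * Complex.I)).cexp
      have := HasDerivAt.comp_ofReal (z := 0) (by simpa using this)
      simpa using this
    have := hh.mul_const (UnitAddTorus.mFourierCoeff F k)
    refine this.congr_of_eventuallyEq (Eventually.of_forall hG1)
  have := hG2.unique hG3
  rw [← this, UnitAddTorus.mFourierCoeff]
  congr 1
  ext τ
  congr 2
  ext j; simp [prT]
end torus

def CosRep (n : ℕ) (κ B : ℝ) (f : EuclideanSpace ℝ (Fin n) → ℝ) : Prop :=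
  ∃ (F : Finset (Fin n → ℤ)) (A θ : (Fin n → ℤ) → ℝ) (ξ : (Fin n → ℤ) → EuclideanSpace ℝ (Fin n)),
    (∀ k ∈ F, ‖ξ k‖ = κ) ∧ ∑ k ∈ F, |A k| ≤ B ∧
    ∀ x, f x = ∑ k ∈ F, A k * cos (inner ℝ (ξ k) x + θ k)

theorem periodic_pd {n : ℕ} {f : EuclideanSpace ℝ (Fin n) → ℝ} (hf : ZnPeriodic n f)
    (e : EuclideanSpace ℝ (Fin n)) : ZnPeriodic n (fun y => fderiv ℝ f y e) := by
  intro x v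
  have h1 : ∀ x : EuclideanSpace ℝ (Fin n), (WithLp.toLp 2 fun i => x i + (v i : ℝ)) =
      x + (WithLp.toLp 2 fun i => (v i : ℝ)) := fun x => by ext i; simp
  have h2 : (fun y => f (y + (WithLp.toLp 2 fun i => (v i : ℝ)))) = f := by
    ext y; rw [← h1]; exact hf y v
  show fderiv ℝ f (WithLp.toLp 2 fun i => x i + (v i : ℝ)) e = _
  rw [h1, ← fderiv_comp_add_right, h2]

section torus2
local instance qeInst1' : MeasureSpace UnitAddCircle := ⟨AddCircle.haarAddCircle⟩
local instance qeInst2' : Measure.IsAddHaarMeasure (volume : Measure UnitAddCircle) :=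
  inferInstanceAs (Measure.IsAddHaarMeasure AddCircle.haarAddCircle)
local instance qeInst3' : IsProbabilityMeasure (volume : Measure UnitAddCircle) :=
  inferInstanceAs (IsProbabilityMeasure AddCircle.haarAddCircle)

theorem cosRep_of_eig (n : ℕ) (f : EuclideanSpace ℝ (Fin n) → ℝ) (lam S : ℝ) (hlam : 0 < lam)
    (hsm : ContDiff ℝ (⊤ : ℕ∞) f) (hper : ZnPeriodic n f) (heig : ∀ x, lap n f x = -lam * f x)
    (hS : ∀ x, |f x| ≤ S) : CosRep n (√lam) (S * (2 * √lam + 1) ^ n) f := by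
  classical
  set e : Fin n → EuclideanSpace ℝ (Fin n) := fun i => EuclideanSpace.single i (1:ℝ) with he
  set f1 : Fin n → EuclideanSpace ℝ (Fin n) → ℝ := fun i y => fderiv ℝ f y (e i) with hf1
  set f2 : Fin n → EuclideanSpace ℝ (Fin n) → ℝ := fun i y => fderiv ℝ (f1 i) y (e i) with hf2
  have sm1 : ∀ i, ContDiff ℝ (⊤ : ℕ∞) (f1 i) := fun i =>
    (hsm.fderiv_right (m := (⊤ : ℕ∞)) (by simp)).clm_apply contDiff_const
  have sm2 : ∀ i, ContDiff ℝ (⊤ : ℕ∞) (f2 i) := fun i =>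
    ((sm1 i).fderiv_right (m := (⊤ : ℕ∞)) (by simp)).clm_apply contDiff_const
  have per1 : ∀ i, ZnPeriodic n (f1 i) := fun i => periodic_pd hper _
  have per2 : ∀ i, ZnPeriodic n (f2 i) := fun i => periodic_pd (per1 i) _
  obtain ⟨F, hF⟩ := exists_liftT hper hsm.continuous
  choose F1 hF1 using fun i => exists_liftT (per1 i) (sm1 i).continuous
  choose F2 hF2 using fun i => exists_liftT (per2 i) (sm2 i).continuous
  have hd : ∀ (g : EuclideanSpace ℝ (Fin n) → ℝ), ContDiff ℝ (⊤ : ℕ∞) g → ∀ i x,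
      HasDerivAt (fun t : ℝ => g (x + t • EuclideanSpace.single i (1:ℝ))) (fderiv ℝ g x (e i)) 0 := by
    intro g hg i x
    exact ((hg.differentiable (by simp)) x).hasFDerivAt.hasLineDerivAt (e i)
  set c := UnitAddTorus.mFourierCoeff F with hc
  have hc2 : ∀ k i, UnitAddTorus.mFourierCoeff (F2 i) k = -(4 * π^2 * (k i)^2) * c k := by
    intro k i
    rw [mFourierCoeff_deriv i (f1 i) (f2 i) (F1 i) (F2 i) (hF1 i) (hF2 i) (hd _ (sm1 i) i) k,
      mFourierCoeff_deriv i f (f1 i) F (F1 i) hF (hF1 i) (hd _ hsm i) k]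
    linear_combination (4 * π^2 * (k i)^2 * c k : ℂ) * Complex.I_sq
  have hsum : ∀ k, ∑ i, UnitAddTorus.mFourierCoeff (F2 i) k = -lam * c k := by
    intro k
    simp only [UnitAddTorus.mFourierCoeff, hc]
    rw [← integral_finsetSum, ← integral_const_mul]
    · congr 1
      ext τ
      obtain ⟨x, rfl⟩ := (prT_quot n).surjective τ
      rw [← Finset.smul_sum]
      have : ∑ i, F2 i (prT n x) = -lam * F (prT n x) := by
        simp_rw [hF2, hF]
        exact_mod_cast heig x
      rw [this]
      simp only [smul_eq_mul]; ring
    · intro i _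
      refine Continuous.integrable_of_hasCompactSupport (by fun_prop) (HasCompactSupport.of_compactSpace _)
  have hzero : ∀ k, 4 * π^2 * ∑ i, ((k i : ℤ):ℝ)^2 ≠ lam → c k = 0 := by
    intro k hk
    have h1 := hsum k
    simp_rw [hc2] at h1
    rw [← Finset.sum_mul] at h1
    have h2 : (((lam - 4 * π^2 * ∑ i, ((k i : ℤ):ℝ)^2 : ℝ)) : ℂ) * c k = 0 := by
      push_cast
      rw [Finset.mul_sum]
      rw [Finset.sum_neg_distrib] at h1
      linear_combination h1
    rcases mul_eq_zero.1 h2 with h | h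
    · exfalso; apply hk
      have := Complex.ofReal_eq_zero.1 h
      linarith
    · exact h
  set box : Finset (Fin n → ℤ) := Fintype.piFinset (fun _ => Finset.Icc (-⌊√lam⌋) ⌊√lam⌋) with hbox
  set Fs := box.filter (fun k => 4 * π^2 * ∑ i, ((k i : ℤ):ℝ)^2 = lam) with hFs
  have hmem : ∀ k : Fin n → ℤ, 4 * π^2 * ∑ i, ((k i : ℤ):ℝ)^2 = lam → k ∈ box := by
    intro k hk
    rw [hbox, Fintype.mem_piFinset]
    intro i
    have h1 : ((k i : ℤ):ℝ)^2 ≤ ∑ i, ((k i : ℤ):ℝ)^2 :=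
      Finset.single_le_sum (f := fun i => ((k i : ℤ):ℝ)^2) (fun i _ => sq_nonneg _) (Finset.mem_univ i)
    have h2 : ((k i : ℤ):ℝ)^2 ≤ lam := by
      have : (1:ℝ) ≤ 4 * π^2 := by nlinarith [Real.pi_gt_three]
      nlinarith [sq_nonneg ((k i : ℤ):ℝ)]
    have h3 : |((k i : ℤ):ℝ)| ≤ √lam := Real.abs_le_sqrt h2
    rw [abs_le] at h3
    rw [Finset.mem_Icc]
    constructor
    · rw [neg_le, Int.le_floor]; push_cast; linarith
    · rw [Int.le_floor]; linarith
  have hout : ∀ k ∉ Fs, c k = 0 := by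
    intro k hk
    apply hzero
    intro h
    exact hk (Finset.mem_filter.2 ⟨hmem k h, h⟩)
  have hsummable : Summable c := summable_of_ne_finset_zero (s := Fs) hout
  have hrep : ∀ x, (f x : ℂ) = ∑ k ∈ Fs, c k * UnitAddTorus.mFourier k (prT n x) := by
    intro x
    have h1 := UnitAddTorus.hasSum_mFourier_series_apply_of_summable hsummable (prT n x)
    have h2 : HasSum (fun k => c k • UnitAddTorus.mFourier k (prT n x)) (∑ k ∈ Fs, c k • UnitAddTorus.mFourier k (prT n x)) :=
      hasSum_sum_of_ne_finset_zero (fun k hk => by rw [hout k hk, zero_smul])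
    rw [← hF, h1.unique h2]; rfl
  have hcS : ∀ k, ‖c k‖ ≤ S := by
    intro k
    have : ‖c k‖ ≤ S * (volume : Measure (UnitAddTorus (Fin n))).real Set.univ := by
      refine norm_integral_le_of_norm_le_const (Eventually.of_forall fun τ => ?_)
      obtain ⟨x, rfl⟩ := (prT_quot n).surjective τ
      rw [norm_smul, hF]
      have h1 : ‖UnitAddTorus.mFourier (-k) (prT n x)‖ ≤ 1 :=
        (ContinuousMap.norm_coe_le_norm _ _).trans (UnitAddTorus.mFourier_norm).le
      have h2 : ‖(f x : ℂ)‖ ≤ S := by simpa using hS x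
      nlinarith [norm_nonneg (f x : ℂ)]
    simpa using this
  refine ⟨Fs, fun k => ‖c k‖, fun k => Complex.arg (c k), fun k => WithLp.toLp 2 (fun i => 2 * π * k i), ?_, ?_, ?_⟩
  · intro k hk
    have := (Finset.mem_filter.1 hk).2
    rw [EuclideanSpace.norm_eq]
    congr 1
    rw [← this, Finset.mul_sum]
    apply Finset.sum_congr rfl
    intro i _
    simp only [norm_eq_abs, sq_abs]; ring
  · have hS0 : 0 ≤ S := (abs_nonneg _).trans (hS 0)
    calc ∑ k ∈ Fs, |‖c k‖| ≤ ∑ k ∈ box, S := by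
          refine (Finset.sum_le_sum_of_subset_of_nonneg (Finset.filter_subset _ _) (fun _ _ _ => abs_nonneg _)).trans ?_
          refine Finset.sum_le_sum fun k _ => ?_
          rw [abs_norm]; exact hcS k
      _ = box.card * S := by simp
      _ ≤ (2 * √lam + 1)^n * S := by
          apply mul_le_mul_of_nonneg_right _ hS0
          rw [hbox, Fintype.card_piFinset]
          simp only [Int.card_Icc, Finset.prod_const, Finset.card_univ, Fintype.card_fin]
          push_cast
          apply pow_le_pow_left₀ (by positivity)
          have h0 : 0 ≤ ⌊√lam⌋ := Int.floor_nonneg.2 (Real.sqrt_nonneg _)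
          have h1 : (((⌊√lam⌋ + 1 - -⌊√lam⌋).toNat : ℤ):ℝ) = ((⌊√lam⌋ + 1 - -⌊√lam⌋ : ℤ):ℝ) := by
            rw [Int.toNat_of_nonneg (by omega)]
          have h2 : ((⌊√lam⌋ + 1 - -⌊√lam⌋).toNat:ℝ) = 2 * ⌊√lam⌋ + 1 := by
            rw [← Int.cast_natCast, h1]; push_cast; ring
          rw [h2]
          linarith [Int.floor_le (√lam)]
      _ = _ := by ring
  · intro x
    have h1 := congrArg Complex.re (hrep x)
    rw [Complex.ofReal_re] at h1
    rw [h1, Complex.re_sum]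
    apply Finset.sum_congr rfl
    intro k _
    rw [mFourier_prT]
    conv_lhs => rw [← Complex.norm_mul_exp_arg_mul_I (c k)]
    rw [mul_assoc, ← Complex.exp_add, Complex.re_ofReal_mul, ← add_mul, ← Complex.ofReal_add,
      Complex.exp_ofReal_mul_I_re]
    congr 2
    rw [PiLp.inner_apply, Finset.mul_sum, add_comm]
    congr 1
    apply Finset.sum_congr rfl
    intro i _
    simp; ring
end torus2

abbrev Eu (n : ℕ) := EuclideanSpace ℝ (Fin n)

def HasMV (n : ℕ) (κ : ℝ) (f : Eu n → ℝ) : Prop :=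
  Continuous f ∧ ∀ ξ0 : Eu n, ‖ξ0‖ = κ → ∀ (x : Eu n) (s : ℝ),
    ∫ y in ball x s, f y = (∫ y in ball (0 : Eu n) s, cos (inner ℝ ξ0 y)) * f x

theorem intOn_ball {n : ℕ} {f : Eu n → ℝ} (hf : Continuous f) (x : Eu n) (s : ℝ) :
    IntegrableOn f (ball x s) :=
  (hf.continuousOn.integrableOn_compact (isCompact_closedBall x s)).mono_set ball_subset_closedBall

theorem cos_mv {n : ℕ} (ξ : Eu n) (θ : ℝ) : HasMV n ‖ξ‖ (fun x => cos (inner ℝ ξ x + θ)) := by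
  refine ⟨by fun_prop, fun ξ0 h0 x s => ?_⟩
  have h1 : ∫ y in ball x s, cos (inner ℝ ξ y + θ) = ∫ y in ball (0 : Eu n) s, cos (inner ℝ ξ (x + y) + θ) := by
    have := (measurePreserving_add_left (volume : Measure (Eu n)) x).setIntegral_preimage_emb
      (measurableEmbedding_addLeft x) (fun y => cos (inner ℝ ξ y + θ)) (ball x s)
    rw [← this]
    congr 2
    ext y; simp
  have h2 : ∫ y in ball (0 : Eu n) s, sin (inner ℝ ξ y) = 0 := by
    have := (Measure.measurePreserving_neg (volume : Measure (Eu n))).setIntegral_preimage_emb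
      (Homeomorph.neg (Eu n)).measurableEmbedding (fun y => sin (inner ℝ ξ y)) (ball 0 s)
    have h3 : (Neg.neg ⁻¹' ball (0 : Eu n) s) = ball 0 s := by ext y; simp
    rw [h3] at this
    simp only [inner_neg_right, sin_neg, integral_neg] at this
    linarith
  have h4 : ∫ y in ball (0 : Eu n) s, cos (inner ℝ ξ y) = ∫ y in ball (0 : Eu n) s, cos (inner ℝ ξ0 y) := by
    let L := (ℝ ∙ (ξ - ξ0))ᗮ.reflection
    have hL : L ξ = ξ0 := Submodule.reflection_sub h0.symm
    have := L.measurePreserving.setIntegral_preimage_emb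
      L.toHomeomorph.measurableEmbedding (fun y => cos (inner ℝ ξ0 y)) (ball 0 s)
    have h3 : (L ⁻¹' ball (0 : Eu n) s) = ball 0 s := by ext y; simp
    rw [h3] at this
    rw [← this]
    congr 1
    ext y
    rw [← hL, L.inner_map_map]
  rw [h1, ← h4]
  have h5 : ∀ y : Eu n, cos (inner ℝ ξ (x + y) + θ) =
      cos (inner ℝ ξ x + θ) * cos (inner ℝ ξ y) - sin (inner ℝ ξ x + θ) * sin (inner ℝ ξ y) := by
    intro y
    rw [inner_add_right, ← cos_add]; congr 1; ring
  simp_rw [h5]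
  rw [integral_sub, integral_const_mul, integral_const_mul, h2]
  · ring
  · exact intOn_ball (by fun_prop) _ _
  · exact intOn_ball (by fun_prop) _ _

theorem HasMV.smul_const {n : ℕ} {κ : ℝ} {f : Eu n → ℝ} (hf : HasMV n κ f) (c : ℝ) : HasMV n κ (fun x => c * f x) := by
  refine ⟨hf.1.const_mul c |> fun h => h, fun ξ0 h0 x s => ?_⟩
  rw [integral_const_mul, hf.2 ξ0 h0]; ring

theorem HasMV.sub {n : ℕ} {κ : ℝ} {f g : Eu n → ℝ} (hf : HasMV n κ f) (hg : HasMV n κ g) :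
    HasMV n κ (fun x => f x - g x) := by
  refine ⟨hf.1.sub hg.1, fun ξ0 h0 x s => ?_⟩
  rw [integral_sub (intOn_ball hf.1 _ _) (intOn_ball hg.1 _ _), hf.2 ξ0 h0, hg.2 ξ0 h0]; ring

theorem CosRep.hasMV {n : ℕ} {κ B : ℝ} {f : Eu n → ℝ} (h : CosRep n κ B f) : HasMV n κ f := by
  obtain ⟨F, A, θ, ξ, h1, -, h3⟩ := h
  obtain rfl : f = fun x => ∑ k ∈ F, A k * cos (inner ℝ (ξ k) x + θ k) := funext h3
  refine ⟨by fun_prop, fun ξ0 h0 x s => ?_⟩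
  rw [integral_finsetSum]
  · rw [Finset.mul_sum]
    apply Finset.sum_congr rfl
    intro k hk
    have := ((cos_mv (ξ k) (θ k)).smul_const (A k)).2 ξ0 (by rw [h0, h1 k hk]) x s
    exact this
  · intro k _
    exact intOn_ball (by fun_prop) _ _

theorem vol_ball_real {n : ℕ} (x : Eu n) {s : ℝ} (hs : 0 < s) :
    volume.real (ball x s) = s ^ n * volume.real (ball (0 : Eu n) 1) := by
  have := Measure.addHaar_ball_of_pos (volume : Measure (Eu n)) x hs
  simp only [measureReal_def, this, ENNReal.toReal_mul]
  rw [ENNReal.toReal_ofReal (by positivity)]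
  simp

theorem harnack {n : ℕ} (hn : 0 < n) {κ : ℝ} (hκ : 0 ≤ κ) {f : Eu n → ℝ} (hf : HasMV n κ f)
    {x y : Eu n} {s θ : ℝ} (hs : 0 < s) (hθ : 0 < θ) (hθ1 : θ < 1)
    (hpos : ∀ w ∈ ball y s, 0 ≤ f w) (hxy : dist x y ≤ θ * s) :
    (1 - κ^2 * s^2 / 2) * (1 - θ)^n * f x ≤ f y := by
  set ξ0 : Eu n := EuclideanSpace.single ⟨0, hn⟩ κ with hξ
  have h0 : ‖ξ0‖ = κ := by simp [hξ, abs_of_nonneg hκ]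
  set V := volume.real (ball (0 : Eu n) 1) with hV
  have hVpos : 0 < V := by
    rw [hV, measureReal_def]
    exact ENNReal.toReal_pos (measure_ball_pos _ _ one_pos).ne' measure_ball_lt_top.ne
  have hfin : ∀ (x : Eu n) s, volume (ball x s) ≠ ⊤ := fun x s => measure_ball_lt_top.ne
  have hup : ∫ y in ball (0 : Eu n) s, cos (inner ℝ ξ0 y) ≤ s ^ n * V := by
    rw [← vol_ball_real (0 : Eu n) hs]
    have : ∫ y in ball (0 : Eu n) s, cos (inner ℝ ξ0 y) ≤ ∫ y in ball (0 : Eu n) s, (1:ℝ) := by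
      apply setIntegral_mono (intOn_ball (by fun_prop) _ _) (intOn_ball (by fun_prop) _ _)
      intro y; exact cos_le_one _
    simpa using this
  set s' := (1 - θ) * s with hs'
  have hs'0 : 0 < s' := by have : 0 < 1 - θ := by linarith
                           positivity
  have hs's : s' ≤ s := by nlinarith
  have hlow : (1 - κ^2 * s^2 / 2) * (s' ^ n * V) ≤ ∫ y in ball (0 : Eu n) s', cos (inner ℝ ξ0 y) := by
    rw [← vol_ball_real (0 : Eu n) hs'0]
    have : ∫ y in ball (0 : Eu n) s', (1 - κ^2 * s^2 / 2) ≤ ∫ y in ball (0 : Eu n) s', cos (inner ℝ ξ0 y) := by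
      apply setIntegral_mono_on (intOn_ball (by fun_prop) _ _) (intOn_ball (by fun_prop) _ _) measurableSet_ball
      intro y hy
      have h1 := one_sub_sq_div_two_le_cos (x := inner ℝ ξ0 y)
      have h2 : |inner ℝ ξ0 y| ≤ κ * s := by
        refine (abs_real_inner_le_norm _ _).trans ?_
        rw [h0]
        have : ‖y‖ < s' := by simpa using hy
        gcongr
        linarith
      have h3 : (inner ℝ ξ0 y)^2 ≤ (κ * s)^2 := sq_le_sq' (by linarith [(abs_le.1 h2).1]) (abs_le.1 h2).2
      nlinarith
    simpa [mul_comm] using this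
  have hsub : ball x s' ⊆ ball y s := by
    apply ball_subset_ball'
    rw [hs']; nlinarith
  have hint : ∫ w in ball x s', f w ≤ ∫ w in ball y s, f w := by
    apply setIntegral_mono_set (intOn_ball hf.1 _ _)
    · exact (ae_restrict_iff' measurableSet_ball).2 (Eventually.of_forall fun w hw => hpos w hw)
    · exact hsub.eventuallyLE
  rw [hf.2 ξ0 h0, hf.2 ξ0 h0] at hint
  have hfx : 0 ≤ f x := hpos x (hsub (mem_ball_self hs'0))
  have hfy : 0 ≤ f y := hpos y (mem_ball_self hs)
  have h6 : (1 - κ^2 * s^2 / 2) * (s' ^ n * V) * f x ≤ s ^ n * V * f y :=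
    (mul_le_mul_of_nonneg_right hlow hfx).trans (hint.trans (mul_le_mul_of_nonneg_right hup hfy))
  rw [hs', mul_pow] at h6
  have h7 : (s^n * V) * ((1 - κ^2 * s^2 / 2) * (1 - θ)^n * f x) ≤ (s^n * V) * f y := by nlinarith
  exact le_of_mul_le_mul_left h7 (by positivity)

theorem sphere_max {n : ℕ} (hn : 0 < n) {κ : ℝ} (hκ : 0 ≤ κ) {w φ : Eu n → ℝ} (hw : HasMV n κ w)
    (hφ : HasMV n κ φ) {z : Eu n} {r : ℝ} (hr : 0 < r) (hpos : ∀ x ∈ closedBall z r, 0 < φ x) :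
    ∃ (m : ℝ) (y : Eu n), dist y z = r ∧ w y = m * φ y ∧ ∀ x ∈ closedBall z r, w x ≤ m * φ x := by
  have hc : IsCompact (closedBall z r) := isCompact_closedBall z r
  obtain ⟨y0, hy0, hmax⟩ := hc.exists_isMaxOn ⟨z, mem_closedBall_self hr.le⟩
    (f := fun x => w x / φ x) (hw.1.continuousOn.div hφ.1.continuousOn (fun x hx => (hpos x hx).ne'))
  set m := w y0 / φ y0 with hm
  have hle : ∀ x ∈ closedBall z r, w x ≤ m * φ x := by
    intro x hx
    have : w x / φ x ≤ m := hmax hx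
    rwa [div_le_iff₀ (hpos x hx)] at this
  set v : Eu n → ℝ := fun x => m * φ x - w x with hv
  have hvm : HasMV n κ v := (hφ.smul_const m).sub hw
  have hZ : IsCompact (closedBall z r ∩ {x | v x = 0}) :=
    hc.inter_right (isClosed_eq hvm.1 continuous_const)
  obtain ⟨y, hy, hymax⟩ := hZ.exists_isMaxOn ⟨y0, hy0, by
    simp only [Set.mem_ofPred_eq, hv, hm]
    rw [div_mul_cancel₀ _ (hpos y0 hy0).ne', sub_self]⟩ (f := fun x => dist x z) (by fun_prop)
  have hvy : v y = 0 := hy.2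
  refine ⟨m, y, ?_, by simp only [hv] at hvy; linarith, hle⟩
  by_contra hne
  have hlt : dist y z < r := lt_of_le_of_ne hy.1 hne
  -- unit direction
  obtain ⟨u, hu, hud⟩ : ∃ u : Eu n, ‖u‖ = 1 ∧ ∀ t : ℝ, 0 ≤ t → ‖(y - z) + t • u‖ = ‖y - z‖ + t := by
    by_cases h : y - z = 0
    · refine ⟨EuclideanSpace.single ⟨0, hn⟩ 1, by simp, fun t ht => ?_⟩
      rw [h]; simp [norm_smul, abs_of_nonneg ht]
    · have h' : ‖y - z‖ ≠ 0 := norm_ne_zero_iff.2 h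
      refine ⟨‖y - z‖⁻¹ • (y - z), by rw [norm_smul]; simp [h'], fun t ht => ?_⟩
      have : (y - z) + t • (‖y - z‖⁻¹ • (y - z)) = (1 + t * ‖y - z‖⁻¹) • (y - z) := by module
      rw [this, norm_smul, Real.norm_of_nonneg (by positivity)]
      field_simp
  obtain ⟨s, hs, hs1, hs2⟩ : ∃ s : ℝ, 0 < s ∧ s ≤ r - dist y z ∧ κ^2 * s^2 ≤ 1 := by
    refine ⟨min (r - dist y z) (1/(κ+1)), lt_min (by linarith) (by positivity), min_le_left _ _, ?_⟩
    have h1 : 0 ≤ min (r - dist y z) (1/(κ+1)) := (lt_min (by linarith) (by positivity)).le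
    have h2 : min (r - dist y z) (1/(κ+1)) ≤ 1/(κ+1) := min_le_right _ _
    have h3 : κ * min (r - dist y z) (1/(κ+1)) ≤ 1 := by
      calc _ ≤ κ * (1/(κ+1)) := by gcongr
        _ ≤ 1 := by rw [mul_one_div, div_le_one (by positivity)]; linarith
    rw [← mul_pow]
    exact pow_le_one₀ (by positivity) h3
  have hb : ball y s ⊆ closedBall z r := by
    intro x hx
    rw [mem_closedBall]
    have := dist_triangle x y z
    have : dist x y < s := hx
    linarith
  have hd : dist (y + (s/2) • u) y = s/2 := by
    rw [dist_eq_norm]; simp [norm_smul, hu, abs_of_pos hs]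
  have h1 := harnack hn hκ hvm (x := y + (s/2) • u) (y := y) (θ := 1/2) hs (by norm_num) (by norm_num)
    (fun x hx => sub_nonneg.2 (hle x (hb hx))) (by rw [hd]; linarith)
  rw [hvy] at h1
  have hxin : y + (s/2) • u ∈ closedBall z r := hb (by rw [mem_ball, hd]; linarith)
  have hge : 0 ≤ v (y + (s/2) • u) := sub_nonneg.2 (hle _ hxin)
  have hz : v (y + (s/2) • u) = 0 := by
    have hc : 0 < (1 - κ^2 * s^2 / 2) * (1 - 1/2 : ℝ)^n := by
      have : 0 < 1 - κ^2 * s^2/2 := by linarith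
      positivity
    nlinarith
  have := hymax (show y + (s/2) • u ∈ _ from ⟨hxin, hz⟩)
  simp only [Set.mem_ofPred_eq] at this
  have e : dist (y + (s/2) • u) z = dist y z + s/2 := by
    rw [dist_eq_norm, dist_eq_norm, ← hud (s/2) (by linarith)]; congr 1; abel
  linarith

theorem snd_test {g g' : ℝ → ℝ} {c : ℝ} (hmax : IsLocalMax g 0)
    (h1 : ∀ᶠ t in nhds (0:ℝ), HasDerivAt g (g' t) t) (h2 : HasDerivAt g' c 0) : c ≤ 0 := by
  by_contra! hc
  have e : deriv g =ᶠ[nhds 0] g' := h1.mono fun t ht => ht.deriv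
  have hd : deriv (deriv g) 0 = c := by rw [e.deriv_eq]; exact h2.deriv
  have hmin : IsLocalMin g 0 := isLocalMin_of_deriv_deriv_pos (by rw [hd]; exact hc)
    hmax.deriv_eq_zero h1.self_of_nhds.continuousAt
  have hconst : g =ᶠ[nhds 0] fun _ => g 0 := by
    filter_upwards [hmax, hmin] with t a b using le_antisymm a b
  have h3 := hconst.deriv.deriv_eq
  rw [hd] at h3
  have h4 : deriv (deriv fun _ : ℝ => g 0) 0 = 0 := by simp
  linarith

def HasLap {n : ℕ} (h : Eu n → ℝ) (p : Eu n) (l : ℝ) : Prop :=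
  ∃ c : Fin n → ℝ, (∀ i, ∃ g' : ℝ → ℝ,
    (∀ᶠ t in nhds (0:ℝ), HasDerivAt (fun t : ℝ => h (p + t • EuclideanSpace.single i (1:ℝ))) (g' t) t) ∧
    HasDerivAt g' (c i) 0) ∧ ∑ i, c i = l

theorem HasLap.nonpos {n : ℕ} {h : Eu n → ℝ} {p : Eu n} {l : ℝ} (H : HasLap h p l) (hm : IsLocalMax h p) : l ≤ 0 := by
  obtain ⟨c, hc, rfl⟩ := H
  apply Finset.sum_nonpos
  intro i _
  obtain ⟨g', h1, h2⟩ := hc i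
  refine snd_test ?_ h1 h2
  have hcont : ContinuousAt (fun t : ℝ => p + t • (EuclideanSpace.single i (1:ℝ) : Eu n)) 0 := by fun_prop
  have e : p + (0:ℝ) • (EuclideanSpace.single i (1:ℝ) : Eu n) = p := by simp
  have hm' : IsLocalMax h (p + (0:ℝ) • (EuclideanSpace.single i (1:ℝ) : Eu n)) := by rw [e]; exact hm
  exact IsMaxFilter.comp_tendsto (g := fun t : ℝ => p + t • (EuclideanSpace.single i (1:ℝ) : Eu n)) hm' hcont

theorem HasLap.add {n : ℕ} {h k : Eu n → ℝ} {p : Eu n} {l m : ℝ} (H : HasLap h p l) (K : HasLap k p m) :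
    HasLap (fun x => h x + k x) p (l + m) := by
  obtain ⟨c, hc, rfl⟩ := H
  obtain ⟨d, hd, rfl⟩ := K
  refine ⟨fun i => c i + d i, fun i => ?_, Finset.sum_add_distrib⟩
  obtain ⟨g, h1, h2⟩ := hc i
  obtain ⟨g', h1', h2'⟩ := hd i
  refine ⟨fun t => g t + g' t, ?_, h2.fun_add h2'⟩
  filter_upwards [h1, h1'] with t a b using a.fun_add b

theorem HasLap.smul_const {n : ℕ} {h : Eu n → ℝ} {p : Eu n} {l : ℝ} (H : HasLap h p l) (a : ℝ) :
    HasLap (fun x => a * h x) p (a * l) := by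
  obtain ⟨c, hc, rfl⟩ := H
  refine ⟨fun i => a * c i, fun i => ?_, by rw [Finset.mul_sum]⟩
  obtain ⟨g, h1, h2⟩ := hc i
  refine ⟨fun t => a * g t, ?_, h2.const_mul a⟩
  filter_upwards [h1] with t b using b.const_mul a

theorem HasLap.const {n : ℕ} (a : ℝ) (p : Eu n) : HasLap (fun _ => a) p 0 :=
  ⟨fun _ => 0, fun i => ⟨fun _ => 0, Eventually.of_forall fun t => hasDerivAt_const _ _, hasDerivAt_const _ _⟩, by simp⟩

theorem HasLap.sum {n : ℕ} {ι : Type*} (s : Finset ι) {h : ι → Eu n → ℝ} {p : Eu n} {l : ι → ℝ}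
    (H : ∀ i ∈ s, HasLap (h i) p (l i)) : HasLap (fun x => ∑ i ∈ s, h i x) p (∑ i ∈ s, l i) := by
  classical
  induction s using Finset.induction_on with
  | empty => simpa using HasLap.const 0 p
  | insert a s ha ih =>
    simp only [Finset.sum_insert ha]
    exact (H a (by simp)).add (ih fun i hi => H i (by simp [hi]))

theorem hasLap_cos {n : ℕ} (ξ : Eu n) (θ : ℝ) (p : Eu n) :
    HasLap (fun x => cos (inner ℝ ξ x + θ)) p (-(‖ξ‖^2) * cos (inner ℝ ξ p + θ)) := by
  have hin : ∀ i, inner ℝ ξ (EuclideanSpace.single i (1:ℝ)) = ξ i := fun i => by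
    simp [EuclideanSpace.inner_single_right]
  have hl : ∀ i t, HasDerivAt (fun t : ℝ => inner ℝ ξ p + t * ξ i + θ) (ξ i) t := fun i t => by
    have := (((hasDerivAt_id t).mul_const (ξ i)).const_add (inner ℝ ξ p)).add_const θ
    simpa using this
  refine ⟨fun i => -(ξ i)^2 * cos (inner ℝ ξ p + θ), fun i => ⟨fun t => -sin (inner ℝ ξ p + t * ξ i + θ) * ξ i, ?_, ?_⟩, ?_⟩
  · refine Eventually.of_forall fun t => ?_
    simp only [inner_add_right, inner_smul_right, hin]
    exact (hl i t).cos
  · have := ((hl i 0).sin.neg.mul_const (ξ i))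
    refine this.congr_deriv ?_
    simp; ring
  · rw [← Finset.sum_mul, Finset.sum_neg_distrib, EuclideanSpace.norm_sq_eq]
    simp

theorem CosRep.hasLap {n : ℕ} {κ B : ℝ} {f : Eu n → ℝ} (h : CosRep n κ B f) (p : Eu n) :
    HasLap f p (-(κ^2) * f p) := by
  obtain ⟨F, A, θ, ξ, h1, -, h3⟩ := h
  obtain rfl : f = fun x => ∑ k ∈ F, A k * cos (inner ℝ (ξ k) x + θ k) := funext h3
  have := HasLap.sum F (p := p) (fun k _ => (hasLap_cos (ξ k) (θ k) p).smul_const (A k))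
  convert this using 1
  rw [Finset.mul_sum]
  apply Finset.sum_congr rfl
  intro k hk
  rw [h1 k hk]; ring

theorem normsq_line {n : ℕ} (p y : Eu n) (i : Fin n) (t : ℝ) :
    ‖p + t • EuclideanSpace.single i (1:ℝ) - y‖^2 = ‖p - y‖^2 + 2 * (p i - y i) * t + t^2 := by
  have : p + t • EuclideanSpace.single i (1:ℝ) - y = (p - y) + t • EuclideanSpace.single i (1:ℝ) := by abel
  rw [this, norm_add_sq_real]
  simp [EuclideanSpace.inner_single_right, inner_smul_right, norm_smul]
  ring

theorem normsq_deriv (a b t : ℝ) : HasDerivAt (fun t : ℝ => a + 2 * b * t + t^2) (2 * b + 2 * t) t := by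
  have := (((hasDerivAt_id t).const_mul (2*b)).const_add a).add ((hasDerivAt_id t).pow 2)
  refine (this.congr_deriv ?_).congr_of_eventuallyEq ?_
  · simp
  · exact Eventually.of_forall fun t => by simp

theorem hasLap_sq {n : ℕ} (y p : Eu n) : HasLap (fun x => ‖x - y‖^2) p (2 * n) := by
  refine ⟨fun _ => 2, fun i => ⟨fun t => 2 * (p i - y i) + 2 * t, ?_, ?_⟩, by simp [mul_comm]⟩
  · refine Eventually.of_forall fun t => ?_
    simp only [normsq_line]
    exact normsq_deriv _ _ _
  · simpa using ((hasDerivAt_id (0:ℝ)).const_mul 2).const_add (2 * (p i - y i))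

theorem hasLap_newton {n : ℕ} (y p : Eu n) (hne : p ≠ y) :
    HasLap (fun x => (‖x - y‖^2) ^ (-((n:ℝ)-2)/2)) p 0 := by
  set s : ℝ := -((n:ℝ)-2)/2 with hs
  set a := ‖p - y‖^2 with ha
  have ha0 : 0 < a := by
    have : 0 < ‖p - y‖ := norm_pos_iff.2 (sub_ne_zero.2 hne)
    positivity
  have hasum : ∑ i, (p i - y i)^2 = a := by
    rw [ha, EuclideanSpace.norm_sq_eq]; simp
  refine ⟨fun i => (2 * s * a ^ (s-1) + 4 * s * (s-1) * a ^ (s-2) * (p i - y i)^2), fun i => ⟨fun t => (2 * (p i - y i) + 2 * t) * s * (a + 2 * (p i - y i) * t + t^2)^(s-1), ?_, ?_⟩, ?_⟩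
  · have : ∀ᶠ t in nhds (0:ℝ), 0 < a + 2 * (p i - y i) * t + t^2 := by
      have hc : ContinuousAt (fun t : ℝ => a + 2 * (p i - y i) * t + t^2) 0 := by fun_prop
      exact hc.eventually (lt_mem_nhds (by simpa using ha0))
    filter_upwards [this] with t ht
    simp only [normsq_line]
    exact (normsq_deriv _ _ _).rpow_const (Or.inl ht.ne')
  · have h1 := (normsq_deriv a (p i - y i) 0).rpow_const (p := s - 1) (Or.inl (by simpa using ha0.ne'))
    have h2 : HasDerivAt (fun t : ℝ => (2 * (p i - y i) + 2 * t) * s) (2 * s) 0 := by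
      simpa using (((hasDerivAt_id (0:ℝ)).const_mul 2).const_add (2 * (p i - y i))).mul_const s
    have h3 := h2.fun_mul h1
    refine h3.congr_deriv ?_
    simp
    rw [show s - 1 - 1 = s - 2 by ring]
    ring
  · rw [Finset.sum_add_distrib, ← Finset.mul_sum (s := Finset.univ) (f := fun i => (p i - y i)^2), hasum]
    simp
    have : a ^ (s-1) = a ^ (s-2) * a := by
      rw [show s - 1 = (s - 2) + 1 by ring, rpow_add_one ha0.ne']
    rw [this, hs]; ring

theorem per_near {n : ℕ} {f : Eu n → ℝ} (hf : ZnPeriodic n f) (z x : Eu n) :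
    ∃ p, f p = f x ∧ dist p z ≤ n := by
  refine ⟨WithLp.toLp 2 fun i => x i + ((⌊z i - x i⌋ : ℤ) : ℝ), hf x _, ?_⟩
  rw [dist_eq_norm]
  have h1 : ‖(WithLp.toLp 2 fun i => x i + ((⌊z i - x i⌋ : ℤ) : ℝ)) - z‖^2 ≤ (n:ℝ) := by
    rw [EuclideanSpace.norm_sq_eq]
    calc _ ≤ ∑ i : Fin n, (1:ℝ) := by
          apply Finset.sum_le_sum
          intro i _
          have a := Int.floor_le (z i - x i)
          have b := Int.lt_floor_add_one (z i - x i)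
          simp only [PiLp.sub_apply, norm_eq_abs, sq_abs]
          rw [sq_le_one_iff_abs_le_one, abs_le]
          constructor <;> linarith
      _ = n := by simp
  rcases Nat.eq_zero_or_pos n with h0 | h0
  · subst h0
    have : ‖(WithLp.toLp 2 fun i => x i + ((⌊z i - x i⌋ : ℤ) : ℝ)) - z‖^2 = 0 := by
      rw [EuclideanSpace.norm_sq_eq]; simp
    simp at this
    simp [this]
  · have : (1:ℝ) ≤ n := by exact_mod_cast h0
    apply le_of_sq_le_sq _ (by positivity)
    nlinarith

theorem per_max {n : ℕ} {f : Eu n → ℝ} (hf : ZnPeriodic n f) (hc : Continuous f) :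
    ∃ x0, ∀ x, f x ≤ f x0 := by
  obtain ⟨x0, -, h⟩ := (isCompact_closedBall (0 : Eu n) n).exists_isMaxOn
    ⟨0, mem_closedBall_self (by positivity)⟩ hc.continuousOn
  refine ⟨x0, fun x => ?_⟩
  obtain ⟨p, hp, hd⟩ := per_near hf 0 x
  rw [← hp]; exact h hd

theorem inner_bdd {n : ℕ} {κ B : ℝ} (hκ : 0 < κ) {f : Eu n → ℝ} (hrep : CosRep n κ B f)
    (hf : ZnPeriodic n f) {c : Eu n} {ρ : ℝ} (hρ : ∀ x ∈ ball c ρ, 0 < f x) : ρ ≤ n := by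
  by_contra! h
  have hpos : ∀ x, 0 < f x := fun x => by
    obtain ⟨p, hp, hd⟩ := per_near hf c x
    rw [← hp]; exact hρ p (by rw [mem_ball]; linarith)
  have hper : ZnPeriodic n (fun x => (-1) * f x) := fun x v => by
    have := hf x v
    simp only at this ⊢
    rw [this]
  obtain ⟨x0, hx0⟩ := per_max hper (hrep.hasMV.1.const_mul (-1) |> fun h => h)
  have := ((hrep.hasLap x0).smul_const (-1)).nonpos (Eventually.of_forall hx0)
  have h2 := hpos x0
  have : 0 < κ^2 * f x0 := by positivity
  linarith

structure PosDom {n : ℕ} (f : Eu n → ℝ) (Ω : Set (Eu n)) : Prop where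
  isOpen : IsOpen Ω
  nonempty : Ω.Nonempty
  pos : ∀ x ∈ Ω, 0 < f x
  bd : ∀ x ∈ closure Ω, f x ≠ 0 → x ∈ Ω
  ballsub : ∀ x ∈ Ω, ∀ r, (∀ y ∈ ball x r, f y ≠ 0) → ball x r ⊆ Ω

theorem nodal_pos {n : ℕ} {ψ : Eu n → ℝ} (hc : Continuous ψ) {Ω : Set (Eu n)} (h : IsNodalDomain ψ Ω) :
    ∃ σ : ℝ, (σ = 1 ∨ σ = -1) ∧ PosDom (fun x => σ * ψ x) Ω := by
  obtain ⟨x, hx, rfl⟩ := h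
  obtain ⟨σ, hσ, hpos⟩ : ∃ σ : ℝ, (σ = 1 ∨ σ = -1) ∧ 0 < σ * ψ x := by
    rcases lt_or_gt_of_ne hx with h | h
    · exact ⟨-1, Or.inr rfl, by linarith⟩
    · exact ⟨1, Or.inl rfl, by linarith⟩
  have hσ0 : σ ≠ 0 := by rcases hσ with h | h <;> rw [h] <;> norm_num
  have hopen : IsOpen {y | ψ y ≠ 0} := isOpen_ne_fun hc continuous_const
  have hmem : x ∈ connectedComponentIn {y | ψ y ≠ 0} x := mem_connectedComponentIn hx
  have hsub : connectedComponentIn {y | ψ y ≠ 0} x ⊆ {y | ψ y ≠ 0} := connectedComponentIn_subset _ _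
  have hpre : IsPreconnected (connectedComponentIn {y | ψ y ≠ 0} x) := isPreconnected_connectedComponentIn
  have key : ∀ T : Set (Eu n), IsPreconnected T → T ⊆ {y | ψ y ≠ 0} → ∀ y ∈ T, y ∈ connectedComponentIn {y | ψ y ≠ 0} x →
      T ⊆ connectedComponentIn {y | ψ y ≠ 0} x := by
    intro T hT hTs y hyT hy
    rw [connectedComponentIn_eq hy]
    exact hT.subset_connectedComponentIn hyT hTs
  refine ⟨σ, hσ, ⟨hopen.connectedComponentIn, ⟨x, hmem⟩, ?_, ?_, ?_⟩⟩
  · intro y hy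
    by_contra! hle
    have hcont : ContinuousOn (fun x => σ * ψ x) (connectedComponentIn {y | ψ y ≠ 0} x) := by fun_prop
    obtain ⟨w, hw, hw0⟩ := hpre.intermediate_value hy hmem hcont ⟨hle, hpos.le⟩
    have := hsub hw
    rcases mul_eq_zero.1 hw0 with h | h
    · exact hσ0 h
    · exact this h
  · intro y hy hy0
    have hy1 : ψ y ≠ 0 := fun h => hy0 (by simp [h])
    refine key (insert y (connectedComponentIn {y | ψ y ≠ 0} x)) ?_ ?_ x (Set.mem_insert_of_mem _ hmem) hmem (Set.mem_insert _ _)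
    · exact hpre.subset_closure (Set.subset_insert _ _) (Set.insert_subset hy subset_closure)
    · exact Set.insert_subset hy1 hsub
  · intro y hy r hr
    rcases le_or_gt r 0 with h | h
    · rw [ball_eq_empty.2 h]; exact Set.empty_subset _
    · refine key _ (convex_ball y r).isPreconnected ?_ y (mem_ball_self h) hy
      intro w hw h0
      exact hr w hw (by simp [h0])

theorem CosRep.neg' {n : ℕ} {κ B : ℝ} {f : Eu n → ℝ} (h : CosRep n κ B f) {σ : ℝ} (hσ : σ = 1 ∨ σ = -1) :
    CosRep n κ B (fun x => σ * f x) := by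
  obtain ⟨F, A, θ, ξ, h1, h2, h3⟩ := h
  refine ⟨F, fun k => σ * A k, θ, ξ, h1, ?_, fun x => ?_⟩
  · have : |σ| = 1 := by rcases hσ with h | h <;> simp [h]
    simpa [abs_mul, this] using h2
  · simp only [h3, Finset.mul_sum, mul_assoc]

theorem line_growth {n : ℕ} {κ B : ℝ} (hκ : 0 ≤ κ) (hB : 0 ≤ B) {f : Eu n → ℝ} (hrep : CosRep n κ B f)
    {z p : Eu n} {h δ D : ℝ} (hh : 0 < h) (hh1 : h ≤ 1) (hD1 : 1 ≤ D) (hδ : ∀ x ∈ closedBall z h, |f x| ≤ δ)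
    (hp : dist p z ≤ D) (m : ℕ) (hm : 0 < m) :
    |f p| ≤ D^m * (B * κ^m / m.factorial + m * δ * (m/h)^m) := by
  have hδ0 : 0 ≤ δ := (abs_nonneg _).trans (hδ z (mem_closedBall_self hh.le))
  have hm1 : (1:ℝ) ≤ m := by exact_mod_cast hm
  rcases le_or_gt (dist p z) h with hle | hlt
  · refine (hδ p hle).trans ?_
    have h1 : (1:ℝ) ≤ D^m := one_le_pow₀ hD1
    have h2 : (1:ℝ) ≤ (m/h)^m := one_le_pow₀ (by rw [le_div_iff₀ hh]; linarith)
    have h3 : δ ≤ m * δ * (m/h)^m := by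
      calc δ = 1 * δ * 1 := by ring
        _ ≤ _ := by gcongr
    have h4 : 0 ≤ B * κ^m / m.factorial := by positivity
    nlinarith
  · obtain ⟨F, A, θ, ξ, h1, h2, h3⟩ := hrep
    set T := dist p z with hT
    have hT0 : 0 < T := by linarith
    set e : Eu n := T⁻¹ • (p - z) with he
    have hen : ‖e‖ = 1 := by
      rw [he, norm_smul, ← dist_eq_norm, ← hT, norm_inv, Real.norm_of_nonneg hT0.le, inv_mul_cancel₀ hT0.ne']
    set g : ℕ → ℝ → ℝ := fun k t => ∑ j ∈ F, A j * (inner ℝ (ξ j) e)^k *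
      cos (inner ℝ (ξ j) z + t * inner ℝ (ξ j) e + θ j + k * (π/2)) with hg
    have hg0 : ∀ t, g 0 t = f (z + t • e) := by
      intro t
      rw [h3]
      simp [hg, inner_add_right, inner_smul_right]
    have hder : ∀ k t, HasDerivAt (g k) (g (k+1) t) t := by
      intro k t
      simp only [hg]
      apply HasDerivAt.fun_sum
      intro j _
      have hl : HasDerivAt (fun t : ℝ => inner ℝ (ξ j) z + t * inner ℝ (ξ j) e + θ j + k * (π/2)) (inner ℝ (ξ j) e) t := by
        have := ((((hasDerivAt_id t).mul_const (inner ℝ (ξ j) e)).const_add (inner ℝ (ξ j) z)).add_const (θ j)).add_const (k * (π/2))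
        simpa using this
      refine (hl.cos.const_mul _).congr_deriv ?_
      have : inner ℝ (ξ j) z + t * inner ℝ (ξ j) e + θ j + ((k+1 : ℕ):ℝ) * (π/2) =
        (inner ℝ (ξ j) z + t * inner ℝ (ξ j) e + θ j + k * (π/2)) + π/2 := by push_cast; ring
      rw [this, cos_add_pi_div_two]; ring
    have hbd : ∀ t, |g m t| ≤ B * κ^m := by
      intro t
      calc |g m t| ≤ ∑ j ∈ F, |A j * (inner ℝ (ξ j) e)^m *
            cos (inner ℝ (ξ j) z + t * inner ℝ (ξ j) e + θ j + m * (π/2))| := Finset.abs_sum_le_sum_abs _ _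
        _ ≤ ∑ j ∈ F, |A j| * κ^m := by
          apply Finset.sum_le_sum
          intro j hj
          rw [abs_mul, abs_mul, abs_pow]
          have a : |inner ℝ (ξ j) e| ≤ κ := by
            refine (abs_real_inner_le_norm _ _).trans ?_
            rw [hen, h1 j hj, mul_one]
          calc _ ≤ |A j| * κ^m * 1 := by
                gcongr
                exact abs_cos_le_one _
            _ = _ := mul_one _
        _ ≤ B * κ^m := by rw [← Finset.sum_mul]; gcongr
    have := interp_bound m hm g hder (B * κ^m) δ h T D hbd hh hlt.le hp (by
      intro t ht0 hth
      rw [hg0]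
      apply hδ
      rw [mem_closedBall, dist_eq_norm]
      simp [norm_smul, hen, abs_of_nonneg ht0, hth])
    rw [hg0] at this
    have e2 : z + T • e = p := by rw [he, smul_inv_smul₀ hT0.ne']; abel
    rwa [e2] at this

theorem growth {n : ℕ} (hn : 0 < n) {κ S : ℝ} (hκ : 0 ≤ κ) (hS : 0 ≤ S) {f : Eu n → ℝ}
    (hrep : CosRep n κ (S * (2 * κ + 1)^n) f) {z p : Eu n} {h δ : ℝ} (hh : 0 < h) (hh1 : h ≤ 1)
    (hδ : ∀ x ∈ closedBall z h, |f x| ≤ δ) (hp : dist p z ≤ n) (hfp : |f p| = S) (N : ℕ) (hN : 0 < N)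
    (hκN : κ ≤ N) :
    S ≤ 2 * (n:ℝ)^(6*n*N) * ((6*n*N : ℕ):ℝ) * δ * (((6*n*N : ℕ):ℝ)/h)^(6*n*N) := by
  set m := 6*n*N with hm
  have hm0 : 0 < m := by positivity
  have hn1 : (1:ℝ) ≤ n := by exact_mod_cast hn
  have h1 := line_growth hκ (by positivity) hrep hh hh1 hn1 hδ hp m hm0
  rw [hfp] at h1
  have hkey : (n:ℝ)^m * (S * (2 * κ + 1)^n * κ^m / m.factorial) ≤ S / 2 := by
    have a1 : ((n:ℝ) * κ)^m ≤ ((m:ℝ)/6)^m := by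
      have : (n:ℝ) * κ ≤ (m:ℝ)/6 := by
        rw [hm]; push_cast
        have : (n:ℝ) * κ ≤ n * N := by gcongr
        linarith
      gcongr
    have a2 : (m:ℝ)^m / m.factorial ≤ exp m := Real.pow_div_factorial_le_exp (m:ℝ) (by positivity) m
    have a3 : exp (m:ℝ) ≤ 3^m := by
      rw [← Real.exp_one_pow]
      gcongr
      exact Real.exp_one_lt_three.le
    have a4 : 2 * (2 * κ + 1)^n ≤ (2:ℝ)^m := by
      have b1 : 2 * κ + 1 ≤ (4:ℝ)^N := by
        have := one_add_mul_le_pow (a := (3:ℝ)) (by norm_num) N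
        have hN' : (1:ℝ) ≤ N := by exact_mod_cast hN
        calc 2 * κ + 1 ≤ 1 + N * 3 := by linarith
          _ ≤ (1+3)^N := this
          _ = 4^N := by norm_num
      calc 2 * (2 * κ + 1)^n ≤ 2^(n*N) * ((4:ℝ)^N)^n := by
            gcongr
            calc (2:ℝ) = 2^1 := by norm_num
              _ ≤ 2^(n*N) := by
                apply pow_le_pow_right₀ (by norm_num)
                exact Nat.mul_pos hn hN
        _ = 2^(3*n*N) := by
          rw [show (4:ℝ) = 2^2 by norm_num, ← pow_mul, ← pow_mul, ← pow_add]; congr 1; ring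
        _ ≤ 2^m := by
          apply pow_le_pow_right₀ (by norm_num)
          rw [hm]; nlinarith [Nat.zero_le (n*N)]
    have a5 : (n*κ)^m / m.factorial ≤ 1/2^m := by
      calc (n*κ)^m / m.factorial ≤ ((m:ℝ)/6)^m / m.factorial := by gcongr
        _ = ((m:ℝ)^m / m.factorial) * (1/6^m) := by rw [div_pow]; field_simp
        _ ≤ 3^m * (1/6^m) := by gcongr; exact a2.trans a3
        _ = 1/2^m := by
          rw [show (6:ℝ) = 3*2 by norm_num, mul_pow]; field_simp
    calc (n:ℝ)^m * (S * (2 * κ + 1)^n * κ^m / m.factorial)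
        = S * (2*κ+1)^n * ((n*κ)^m / m.factorial) := by rw [mul_pow]; ring
      _ ≤ S * (2^m/2) * (1/2^m) := by gcongr; linarith
      _ = S/2 := by field_simp
  have e : (n:ℝ)^m * (S * (2 * κ + 1)^n * κ^m / m.factorial + m * δ * (m/h)^m) =
    (n:ℝ)^m * (S * (2 * κ + 1)^n * κ^m / m.factorial) + (n:ℝ)^m * (m * δ * (m/h)^m) := by ring
  rw [e] at h1
  have e3 : 2 * (n:ℝ)^m * (m:ℝ) * δ * ((m:ℝ)/h)^m = 2 * ((n:ℝ)^m * (m * δ * (m/h)^m)) := by ring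
  rw [e3]; linarith

theorem good_blocks (μ : ℕ → ℝ) (q K : ℕ) (hmono : ∀ i < K * q, μ i ≤ μ (i+1)) (h0 : 0 < μ 0)
    (hlt : μ (K * q) < 2^(K*q) * μ 0) :
    ∃ G : Finset ℕ, G ⊆ Finset.range K ∧ K ≤ 2 * G.card ∧
      ∀ k ∈ G, ∃ i, k * q ≤ i ∧ i < (k+1) * q ∧ μ (i+1) ≤ 4 * μ i := by
  classical
  set P : ℕ → Prop := fun k => ∃ i, k * q ≤ i ∧ i < (k+1) * q ∧ μ (i+1) ≤ 4 * μ i with hP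
  refine ⟨(Finset.range K).filter P, Finset.filter_subset _ _, ?_, fun k hk => (Finset.mem_filter.1 hk).2⟩
  have hind : ∀ k ≤ K, 4^(q * ((Finset.range k).filter (fun k => ¬ P k)).card) * μ 0 ≤ μ (k * q) := by
    intro k
    induction k with
    | zero => intro _; simp
    | succ k ih =>
      intro hk
      have ih' := ih (by omega)
      have hkq : (k+1) * q ≤ K * q := Nat.mul_le_mul_right _ hk
      rw [Finset.range_add_one, Finset.filter_insert]
      by_cases hPk : P k
      · rw [if_neg (by simpa using hPk)]
        refine ih'.trans ?_
        have : ∀ j ≤ q, μ (k*q) ≤ μ (k*q + j) := by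
          intro j
          induction j with
          | zero => intro _; simp
          | succ j ihj =>
            intro hj
            exact (ihj (by omega)).trans (hmono (k*q+j) (by nlinarith))
        have := this q le_rfl
        rwa [show (k+1)*q = k*q+q by ring]
      · rw [if_pos hPk, Finset.card_insert_of_notMem (by simp)]
        have : ∀ j ≤ q, 4^j * μ (k*q) ≤ μ (k*q + j) := by
          intro j
          induction j with
          | zero => intro _; simp
          | succ j ihj =>
            intro hj
            have a := ihj (by omega)
            have b : 4 * μ (k*q+j) ≤ μ (k*q+j+1) := by
              by_contra! hcon
              exact hPk ⟨k*q+j, by omega, by nlinarith, hcon.le⟩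
            rw [← add_assoc]
            calc (4:ℝ)^(j+1) * μ (k*q) = 4 * (4^j * μ (k*q)) := by ring
              _ ≤ 4 * μ (k*q+j) := by linarith
              _ ≤ _ := b
        have := this q le_rfl
        rw [show (k+1)*q = k*q+q by ring]
        refine le_trans ?_ this
        rw [mul_add, mul_one, pow_add, mul_comm ((4:ℝ)^_) (4^q), mul_assoc]
        gcongr
  have hK := hind K le_rfl
  have hcard := Finset.card_filter_add_card_filter_not (s := Finset.range K) P
  rw [Finset.card_range] at hcard
  by_contra! hcon
  set b := ((Finset.range K).filter (fun k => ¬ P k)).card with hb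
  have : (2:ℝ)^(K*q) ≤ 4^(q*b) := by
    rw [show (4:ℝ) = 2^2 by norm_num, ← pow_mul]
    apply pow_le_pow_right₀ (by norm_num)
    nlinarith
  nlinarith

set_option maxHeartbeats 1600000 in
theorem local_asym {n : ℕ} (hn : 0 < n) {κ S : ℝ} (hκ : 0 < κ) (hS : 0 < S) {f : Eu n → ℝ}
    (hrep : CosRep n κ (S * (2 * κ + 1)^n) f) (hper : ZnPeriodic n f) (hfS : ∀ x, |f x| ≤ S)
    {x1 : Eu n} (hx1 : |f x1| = S) {z : Eu n} (hz : f z = 0) {ρ : ℝ} (hρ : 0 < ρ) (hρ1 : ρ ≤ 1)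
    (hκρ : κ * ρ ≤ 1/20) (N : ℕ) (hN : 0 < N) (hκN : κ ≤ N) (q K : ℕ) (hq : 0 < q) (hK : 0 < K)
    (hQ : 4 * (n:ℝ)^(6*n*N) * ((6*n*N : ℕ):ℝ) * 2^(n+1) * (2 * ((6*n*N : ℕ):ℝ)/ρ)^(6*n*N) < 2^(K*q)) :
    ∃ (G : Finset ℕ) (y : ℕ → Eu n), G ⊆ Finset.range K ∧ K ≤ 2 * G.card ∧
      ∀ k ∈ G, ρ * (1 + k/K) ≤ dist (y k) z ∧ dist (y k) z ≤ ρ * (1 + (k+1)/K) ∧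
        ∀ x, dist x (y k) ≤ ρ / (8 * n * (K * q)) → f x < 0 := by
  have hn1 : (1:ℝ) ≤ n := by exact_mod_cast hn
  have hK1 : (1:ℝ) ≤ K := by exact_mod_cast hK
  have hq1 : (1:ℝ) ≤ q := by exact_mod_cast hq
  set L : ℝ := K * q with hL
  have hL1 : 1 ≤ L := by nlinarith
  have hL0 : 0 < L := by linarith
  set ξ0 : Eu n := EuclideanSpace.single ⟨0, hn⟩ κ with hξ
  have h0 : ‖ξ0‖ = κ := by simp [hξ, abs_of_nonneg hκ.le]
  set φ : Eu n → ℝ := fun x => cos (inner ℝ ξ0 x + -inner ℝ ξ0 z) with hφ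
  have hφmv : HasMV n κ φ := by rw [← h0]; exact cos_mv _ _
  have hφ1 : ∀ x, φ x ≤ 1 := fun x => cos_le_one _
  have hφz : φ z = 1 := by simp [hφ]
  have hφl : ∀ x, dist x z ≤ 2 * ρ → 199/200 ≤ φ x := by
    intro x hx
    have e : inner ℝ ξ0 x + -inner ℝ ξ0 z = inner ℝ ξ0 (x - z) := by rw [inner_sub_right]; ring
    simp only [hφ, e]
    have h1 := one_sub_sq_div_two_le_cos (x := inner ℝ ξ0 (x-z))
    have h2 : |inner ℝ ξ0 (x-z)| ≤ 1/10 := by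
      refine (abs_real_inner_le_norm _ _).trans ?_
      rw [h0, ← dist_eq_norm]
      have := mul_le_mul_of_nonneg_left hx hκ.le
      linarith
    have h3 : (inner ℝ ξ0 (x-z))^2 ≤ (1/10)^2 := sq_le_sq' (by linarith [(abs_le.1 h2).1]) (abs_le.1 h2).2
    linarith
  set w : Eu n → ℝ := fun x => (-1) * f x with hw
  have hwmv : HasMV n κ w := hrep.hasMV.smul_const (-1)
  set r : ℕ → ℝ := fun i => ρ * (1 + i / L) with hr
  have hr2 : ∀ i ≤ K * q, r i ≤ 2 * ρ := by
    intro i hi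
    have : (i:ℝ) ≤ L := by rw [hL]; exact_mod_cast hi
    have : i / L ≤ 1 := by rw [div_le_one hL0]; exact this
    simp only [hr]
    have := mul_le_mul_of_nonneg_left this hρ.le
    linarith
  have hrρ : ∀ i, ρ ≤ r i := by
    intro i
    have : 0 ≤ i / L := by positivity
    simp only [hr]
    have := mul_nonneg hρ.le this
    linarith
  have hrs : ∀ i, r (i+1) = r i + ρ / L := by
    intro i; simp only [hr]; push_cast; field_simp; ring
  have hex : ∀ i, ∃ (m : ℝ) (y : Eu n), i ≤ K * q → (dist y z = r i ∧ w y = m * φ y ∧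
      ∀ x ∈ closedBall z (r i), w x ≤ m * φ x) := by
    intro i
    by_cases hi : i ≤ K * q
    · obtain ⟨m, y, h⟩ := sphere_max hn hκ.le hwmv hφmv (z := z) (r := r i) (by linarith [hrρ i])
        (fun x hx => by
          have := hφl x (le_trans hx (hr2 i hi))
          linarith)
      exact ⟨m, y, fun _ => h⟩
    · exact ⟨0, 0, fun h => absurd h hi⟩
  choose μ y hy using hex
  have hφy : ∀ i ≤ K * q, 199/200 ≤ φ (y i) := fun i hi => hφl _ (by rw [(hy i hi).1]; exact hr2 i hi)
  have hmono : ∀ i < K * q, μ i ≤ μ (i+1) := by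
    intro i hi
    have a := (hy (i+1) hi).2.2 (y i) (by
      rw [mem_closedBall, (hy i hi.le).1, hrs]
      have : 0 < ρ / L := by positivity
      linarith)
    rw [(hy i hi.le).2.1] at a
    exact le_of_mul_le_mul_right a (by linarith [hφy i hi.le])
  have hr0 : r 0 = ρ := by simp [hr]
  obtain ⟨hy01, hy02, hy03⟩ := hy 0 (Nat.zero_le _)
  rw [hr0] at hy01 hy03
  have hμ00 : 0 ≤ μ 0 := by
    have := hy03 z (mem_closedBall_self hρ.le)
    rw [hφz] at this
    simp only [hw, hz] at this
    linarith
  have hsmall : κ^2 * ρ^2 ≤ 1/400 := by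
    rw [← mul_pow]
    calc (κ*ρ)^2 ≤ (1/20)^2 := by gcongr
      _ = 1/400 := by norm_num
  -- bound of f near z
  have hnear : ∀ x ∈ closedBall z (ρ/2), |f x| ≤ 2^(n+1) * μ 0 := by
    intro x hx
    have hxd : dist x z ≤ ρ/2 := hx
    have hv : HasMV n κ (fun x => μ 0 * φ x - w x) := (hφmv.smul_const (μ 0)).sub hwmv
    have h1 := harnack hn hκ.le hv (x := x) (y := z) (θ := 1/2) hρ (by norm_num) (by norm_num)
      (fun x hx => sub_nonneg.2 (hy03 x (ball_subset_closedBall hx))) (by linarith)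
    have hφx := hφl x (by linarith)
    have hvx : 0 ≤ μ 0 * φ x - w x := sub_nonneg.2 (hy03 x (mem_closedBall.2 (by linarith)))
    simp only [hφz, hw, hz] at h1 hvx
    have h2 : (1/2) * (1/2:ℝ)^n * (μ 0 * φ x - (-1) * f x) ≤ μ 0 := by
      have hhalf : (1:ℝ) - 1/2 = 1/2 := by norm_num
      rw [hhalf] at h1
      have ha : (1:ℝ)/2 ≤ 1 - κ ^ 2 * ρ ^ 2 / 2 := by linarith
      refine le_trans ?_ (le_trans h1 (by linarith))
      gcongr
    have h3 : μ 0 * φ x - (-1) * f x ≤ 2^(n+1) * μ 0 := by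
      have : (2:ℝ)^(n+1) * ((1/2) * (1/2:ℝ)^n * (μ 0 * φ x - (-1) * f x)) = μ 0 * φ x - (-1) * f x := by
        rw [div_pow, one_pow, pow_succ]; field_simp
      rw [← this]; gcongr
    have h4 : 0 ≤ μ 0 * φ x := by apply mul_nonneg hμ00; linarith
    have h5 : μ 0 * φ x ≤ 2^(n+1) * μ 0 := by
      have : (1:ℝ) ≤ 2^(n+1) := one_le_pow₀ (by norm_num)
      have h6 := mul_le_mul_of_nonneg_left (hφ1 x) hμ00
      have h7 := mul_le_mul_of_nonneg_right this hμ00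
      linarith
    rw [abs_le]; constructor <;> linarith
  obtain ⟨p, hp, hpd⟩ := per_near hper z x1
  have hgr := growth hn hκ.le hS.le hrep (z := z) (p := p) (h := ρ/2) (by positivity) (by linarith) hnear hpd
    (by rw [hp, hx1]) N hN hκN
  set m := 6*n*N with hm
  have hmpos : (0:ℝ) < m := by exact_mod_cast (by positivity : 0 < m)
  have e1 : (m:ℝ)/(ρ/2) = 2 * m / ρ := by field_simp
  rw [e1] at hgr
  have hμ0 : 0 < μ 0 := by
    rcases hμ00.lt_or_eq with h | h
    · exact h
    · rw [← h] at hgr; simp at hgr; linarith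
  have hμL : μ (K*q) ≤ 2 * S := by
    obtain ⟨-, h2, -⟩ := hy (K*q) le_rfl
    have h3 : w (y (K*q)) ≤ S := by
      have := (abs_le.1 (hfS (y (K*q)))).1
      simp only [hw]; linarith
    have h4 := hφy (K*q) le_rfl
    rw [h2] at h3
    by_contra! hc
    have h5 := mul_le_mul_of_nonneg_left h4 (show 0 ≤ μ (K*q) by linarith)
    linarith
  have hlt : μ (K*q) < 2^(K*q) * μ 0 := by
    refine lt_of_le_of_lt hμL ?_
    refine lt_of_le_of_lt ?_ (mul_lt_mul_of_pos_right hQ hμ0)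
    calc 2 * S ≤ 2 * (2 * (n:ℝ)^m * m * (2^(n+1) * μ 0) * (2 * m/ρ)^m) := by linarith
      _ = _ := by ring
  obtain ⟨G, hG1, hG2, hG3⟩ := good_blocks μ q K hmono hμ0 hlt
  have hμpos : ∀ i ≤ K * q, 0 < μ i := by
    intro i
    induction i with
    | zero => intro _; exact hμ0
    | succ i ih => intro hi; exact lt_of_lt_of_le (ih (by omega)) (hmono i (by omega))
  have hG4 : ∀ k, ∃ i, k ∈ G → (k * q ≤ i ∧ i < (k+1) * q ∧ μ (i+1) ≤ 4 * μ i) := by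
    intro k
    by_cases hk : k ∈ G
    · obtain ⟨i, hi⟩ := hG3 k hk
      exact ⟨i, fun _ => hi⟩
    · exact ⟨0, fun h => absurd h hk⟩
  choose I hI using hG4
  refine ⟨G, fun k => y (I k), hG1, hG2, fun k hk => ?_⟩
  obtain ⟨hi1, hi2, hi3⟩ := hI k hk
  have hkK : k < K := Finset.mem_range.1 (hG1 hk)
  have hiL : I k < K * q := lt_of_lt_of_le hi2 (Nat.mul_le_mul_right _ hkK)
  obtain ⟨hd, hwy, hle⟩ := hy (I k) hiL.le
  have hi1' : (k:ℝ) * q ≤ I k := by exact_mod_cast hi1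
  have hi2' : (I k : ℝ) ≤ (k+1) * q := by exact_mod_cast hi2.le
  refine ⟨?_, ?_, ?_⟩
  · rw [hd]; simp only [hr]
    gcongr ρ * (1 + ?_)
    rw [hL, div_le_div_iff₀ (by positivity) (by positivity)]
    have := mul_le_mul_of_nonneg_left hi1' (show (0:ℝ) ≤ K by linarith)
    linarith
  · rw [hd]; simp only [hr]
    gcongr ρ * (1 + ?_)
    rw [hL, div_le_div_iff₀ (by positivity) (by positivity)]
    have := mul_le_mul_of_nonneg_left hi2' (show (0:ℝ) ≤ K by linarith)
    linarith
  · intro x hx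
    set i := I k with hi
    have hμi := hμpos i hiL.le
    have hsub : ∀ x ∈ ball (y i) (ρ/L), dist x z ≤ r (i+1) := by
      intro x hx
      have := dist_triangle x (y i) z
      have h2 : dist x (y i) < ρ/L := hx
      rw [hrs]; linarith
    have hv : HasMV n κ (fun x => 4 * μ i * φ x - w x) := (hφmv.smul_const (4 * μ i)).sub hwmv
    have hθ : (0:ℝ) < 1/(8*n) := by positivity
    have hθ1 : (1:ℝ)/(8*n) < 1 := by rw [div_lt_one (by positivity)]; linarith
    have hsL : 0 < ρ / L := by positivity
    have hx' : dist x (y i) ≤ 1/(8*n) * (ρ/L) := by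
      refine hx.trans (le_of_eq ?_)
      field_simp
    have hpos : ∀ x ∈ ball (y i) (ρ/L), 0 ≤ 4 * μ i * φ x - w x := by
      intro x hx
      have a := (hy (i+1) hiL).2.2 x (hsub x hx)
      have b := hφl x ((hsub x hx).trans (hr2 _ hiL))
      have : μ (i+1) * φ x ≤ 4 * μ i * φ x := by
        apply mul_le_mul_of_nonneg_right hi3; linarith
      linarith
    have h1 := harnack hn hκ.le hv (x := x) (y := y i) (θ := 1/(8*n)) hsL hθ hθ1 hpos hx'
    have hxb : x ∈ ball (y i) (ρ/L) := by
      rw [mem_ball]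
      exact lt_of_le_of_lt hx' (mul_lt_of_lt_one_left hsL hθ1)
    have hvx := hpos x hxb
    have hφx := hφl x ((hsub x hxb).trans (hr2 _ hiL))
    have hb : (7:ℝ)/8 ≤ (1 - 1/(8*n))^n := by
      have := one_add_mul_le_pow (a := -(1/(8*n:ℝ))) (by linarith) n
      have e : (1:ℝ) + n * -(1/(8*n)) = 7/8 := by field_simp; norm_num
      rw [e] at this
      rwa [sub_eq_add_neg]
    have hsl : κ^2 * (ρ/L)^2 ≤ 1/400 := by
      refine le_trans ?_ hsmall
      have : ρ / L ≤ ρ := div_le_self hρ.le hL1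
      gcongr
    simp only [hwy] at h1
    have hφyi := hφ1 (y i)
    have h2 : (199/200) * (7/8) * (4 * μ i * φ x - w x) ≤ 4 * μ i * φ (y i) - μ i * φ (y i) := by
      have ha : (199:ℝ)/200 ≤ 1 - κ ^ 2 * (ρ / L) ^ 2 / 2 := by linarith
      refine le_trans ?_ h1
      gcongr
    have h3 : 4 * μ i * φ (y i) - μ i * φ (y i) ≤ 3 * μ i := by
      have := mul_le_mul_of_nonneg_left hφyi hμi.le
      linarith
    have h4 : 4 * μ i * φ x - w x ≤ (7/2) * μ i := by linarith
    have h5 : (398/100) * μ i ≤ 4 * μ i * φ x := by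
      have := mul_le_mul_of_nonneg_left hφx hμi.le
      linarith
    have h6 : 0 < w x := by linarith
    simp only [hw] at h6
    linarith

def newt {n : ℕ} (y x : Eu n) : ℝ := (‖x - y‖^2) ^ (-((n:ℝ)-2)/2)

theorem newt_eq {n : ℕ} (hn : 2 ≤ n) {x y : Eu n} (h : 0 < dist x y) : newt y x = ((dist x y)^(n-2))⁻¹ := by
  have h2 : -((n:ℝ)-2) = -((n-2 : ℕ) : ℝ) := by push_cast [Nat.cast_sub hn]; ring
  rw [newt, ← dist_eq_norm, ← rpow_natCast (dist x y) 2, ← rpow_mul h.le, h2, ← rpow_natCast, ← rpow_neg h.le]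
  congr 1
  push_cast; ring

theorem newt_le {n : ℕ} (hn : 2 ≤ n) {x y : Eu n} {a : ℝ} (ha : 0 < a) (h : a ≤ dist x y) : newt y x ≤ (a^(n-2))⁻¹ := by
  rw [newt_eq hn (by linarith)]
  gcongr

theorem le_newt {n : ℕ} (hn : 2 ≤ n) {x y : Eu n} {b : ℝ} (h0 : 0 < dist x y) (h : dist x y ≤ b) : (b^(n-2))⁻¹ ≤ newt y x := by
  rw [newt_eq hn h0]
  gcongr

theorem newt_cont {n : ℕ} {x y : Eu n} (h : x ≠ y) : ContinuousAt (newt y) x := by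
  unfold newt
  apply ContinuousAt.rpow_const (by fun_prop)
  left
  have : 0 < ‖x - y‖ := norm_pos_iff.2 (sub_ne_zero.2 h)
  positivity

theorem card_near (G : Finset ℕ) (t : ℝ) (h : ∀ k ∈ G, t - 2 < k ∧ (k:ℝ) < t + 1) : G.card ≤ 3 := by
  rcases G.eq_empty_or_nonempty with h0 | h0
  · simp [h0]
  · have hsub : G ⊆ Finset.Icc (G.min' h0) (G.min' h0 + 2) := by
      intro k hk
      rw [Finset.mem_Icc]
      refine ⟨Finset.min'_le _ _ hk, ?_⟩
      have a := h _ (G.min'_mem h0)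
      have b := h _ hk
      have : (k:ℝ) < (G.min' h0 + 3 : ℕ) := by push_cast; linarith
      have : k < G.min' h0 + 3 := by exact_mod_cast this
      omega
    refine (Finset.card_le_card hsub).trans ?_
    simp
    omega

theorem vmax {n : ℕ} (hn : 3 ≤ n) {ρ : ℝ} (hρ : 0 < ρ) {K q : ℕ} (hK : 0 < K) (hq : 0 < q) {G : Finset ℕ}
    (hG : G ⊆ Finset.range K) {y : ℕ → Eu n} {z x : Eu n}
    (h1 : ∀ k ∈ G, ρ * (1 + k/K) ≤ dist (y k) z ∧ dist (y k) z ≤ ρ * (1 + (k+1)/K))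
    (h2 : ∀ k ∈ G, ρ / (8 * n * (K * q)) ≤ dist x (y k)) :
    ∑ k ∈ G, newt (y k) x ≤ (3 * (8 * n * (K * q) : ℝ)^(n-2) + (K:ℝ)^(n-2+1)) / ρ^(n-2) := by
  classical
  have hK0 : (0:ℝ) < K := by exact_mod_cast hK
  have hq0 : (0:ℝ) < q := by exact_mod_cast hq
  have hn0 : (0:ℝ) < n := by exact_mod_cast (by omega : 0 < n)
  set P : ℕ → Prop := fun k => dist x (y k) < ρ / K with hP
  rw [← Finset.sum_filter_add_sum_filter_not G P]
  have hs1 : ∑ k ∈ G.filter P, newt (y k) x ≤ 3 * ((ρ / (8 * n * (K * q)))^(n-2))⁻¹ := by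
    have hc : (G.filter P).card ≤ 3 := by
      apply card_near _ (K * (dist x z / ρ - 1))
      intro k hk
      obtain ⟨hk, hPk⟩ := Finset.mem_filter.1 hk
      obtain ⟨a, b⟩ := h1 k hk
      have c := dist_triangle x (y k) z
      have d := dist_triangle_left (y k) z x
      have hPk' : dist x (y k) < ρ / K := hPk
      have e1 : dist x z < ρ * (1 + (k+2)/K) := by
        have : ρ * (1 + ((k:ℝ)+2)/K) = ρ * (1 + (k+1)/K) + ρ / K := by field_simp; ring
        linarith
      have e2 : ρ * (1 + ((k:ℝ)-1)/K) < dist x z := by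
        have : ρ * (1 + ((k:ℝ)-1)/K) = ρ * (1 + k/K) - ρ / K := by field_simp; ring
        linarith
      have f1 : dist x z / ρ < 1 + (k+2)/K := by rw [div_lt_iff₀ hρ]; linarith
      have f2 : 1 + ((k:ℝ)-1)/K < dist x z / ρ := by rw [lt_div_iff₀ hρ]; linarith
      have g1 : K * (dist x z / ρ - 1) < K * (((k:ℝ)+2)/K) := by gcongr; linarith
      have g2 : K * (((k:ℝ)-1)/K) < K * (dist x z / ρ - 1) := by gcongr; linarith
      rw [mul_div_cancel₀ _ hK0.ne'] at g1 g2
      constructor <;> linarith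
    calc _ ≤ ∑ k ∈ G.filter P, ((ρ / (8 * n * (K * q)))^(n-2))⁻¹ := by
          apply Finset.sum_le_sum
          intro k hk
          exact newt_le (by omega) (by positivity) (h2 k (Finset.mem_filter.1 hk).1)
      _ = (G.filter P).card * ((ρ / (8 * n * (K * q)))^(n-2))⁻¹ := by simp
      _ ≤ _ := by
        gcongr
        exact_mod_cast hc
  have hs2 : ∑ k ∈ G.filter (fun k => ¬ P k), newt (y k) x ≤ K * ((ρ / K)^(n-2))⁻¹ := by
    have hc : (G.filter (fun k => ¬ P k)).card ≤ K := by
      have := Finset.card_le_card ((Finset.filter_subset (fun k => ¬ P k) G).trans hG)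
      simpa using this
    calc _ ≤ ∑ k ∈ G.filter (fun k => ¬ P k), ((ρ / K)^(n-2))⁻¹ := by
          apply Finset.sum_le_sum
          intro k hk
          exact newt_le (by omega) (by positivity) (not_lt.1 (Finset.mem_filter.1 hk).2)
      _ = (G.filter (fun k => ¬ P k)).card * ((ρ / K)^(n-2))⁻¹ := by simp
      _ ≤ _ := by
        gcongr
  refine (add_le_add hs1 hs2).trans (le_of_eq ?_)
  rw [div_pow, div_pow, inv_div, inv_div, add_div, pow_succ]
  ring

theorem barrier {n : ℕ} (hn : 3 ≤ n) {κ S : ℝ} (hκ : 0 < κ) (hS : 0 < S) {f : Eu n → ℝ}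
    (hrep : CosRep n κ (S * (2 * κ + 1)^n) f) (hper : ZnPeriodic n f) (hfS : ∀ x, |f x| ≤ S)
    {x1 : Eu n} (hx1 : |f x1| = S) {Ω : Set (Eu n)} (hΩ : PosDom f Ω) {ρ : ℝ} (hρ : 0 < ρ) (hρ1 : ρ ≤ 1)
    (hκρ : κ * ρ ≤ 1/20) (N : ℕ) (hN : 0 < N) (hκN : κ ≤ N) (q K : ℕ) (hq : 0 < q) (hK : 0 < K)
    (hQ : 4 * (n:ℝ)^(6*n*N) * ((6*n*N : ℕ):ℝ) * 2^(n+1) * (2 * ((6*n*N : ℕ):ℝ)/ρ)^(6*n*N) < 2^(K*q))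
    (hW : 1296 * 3^(n-2) * (3 * (8 * n * (K * q) : ℝ)^(n-2) + (K:ℝ)^(n-2+1)) * (κ*ρ)^2 < K) :
    ∃ x0, ball x0 ρ ⊆ Ω := by
  have hK0 : (0:ℝ) < K := by exact_mod_cast hK
  have hq0 : (0:ℝ) < q := by exact_mod_cast hq
  have hn3 : (3:ℝ) ≤ n := by exact_mod_cast hn
  have hcont : Continuous f := hrep.hasMV.1
  have hbdd : BddAbove (f '' Ω) := ⟨S, by rintro _ ⟨x, -, rfl⟩; exact (le_abs_self _).trans (hfS x)⟩
  have hne : (f '' Ω).Nonempty := hΩ.nonempty.image f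
  set M := sSup (f '' Ω) with hM
  have hfM : ∀ x ∈ Ω, f x ≤ M := fun x hx => le_csSup hbdd ⟨x, hx, rfl⟩
  have hM0 : 0 < M := by
    obtain ⟨x, hx⟩ := hΩ.nonempty
    exact lt_of_lt_of_le (hΩ.pos x hx) (hfM x hx)
  set ε := 81 * (κ*ρ)^2 with hε
  have hε0 : 0 < ε := by positivity
  have hε1 : ε < 1/4 := by
    have : (κ*ρ)^2 ≤ (1/20)^2 := by gcongr
    rw [hε]; linarith
  obtain ⟨_, ⟨x0, hx0, rfl⟩, hx0M⟩ := exists_lt_of_lt_csSup hne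
    (show (1-ε)*M < sSup (f '' Ω) by rw [← hM]; nlinarith)
  refine ⟨x0, ?_⟩
  by_contra hnot
  obtain ⟨z, hz, hfz⟩ : ∃ z ∈ ball x0 ρ, f z = 0 := by
    by_contra! hcon
    exact hnot (hΩ.ballsub x0 hx0 ρ hcon)
  have hz' : dist z x0 < ρ := hz
  obtain ⟨G, y, hG1, hG2, hG3⟩ := local_asym (by omega : 0 < n) hκ hS hrep hper hfS hx1 hfz hρ hρ1 hκρ N hN hκN q K hq hK hQ
  set s' := ρ / (8 * n * (K * q)) with hs'
  have hs'0 : 0 < s' := by positivity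
  have hcl : ∀ x ∈ closure Ω, 0 ≤ f x := by
    intro x hx
    have hsub : closure Ω ⊆ {x | 0 ≤ f x} :=
      closure_minimal (fun x hx => (hΩ.pos x hx).le) (isClosed_le continuous_const hcont)
    exact hsub hx
  have hclM : ∀ x ∈ closure Ω, f x ≤ M := by
    intro x hx
    by_cases h : f x = 0
    · rw [h]; exact hM0.le
    · exact hfM x (hΩ.bd x hx h)
  have hfar : ∀ x ∈ closure Ω, ∀ k ∈ G, s' ≤ dist x (y k) := by
    intro x hx k hk
    by_contra! hcon
    have := (hG3 k hk).2.2 x hcon.le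
    have := hcl x hx
    linarith
  have hneq : ∀ x ∈ closure Ω, ∀ k ∈ G, x ≠ y k := by
    intro x hx k hk h
    have := hfar x hx k hk
    rw [h, dist_self] at this
    linarith
  set W : ℝ := 3 * (8 * n * (K * q) : ℝ)^(n-2) + (K:ℝ)^(n-2+1) with hWd
  have hW0 : 0 < W := by positivity
  set Vm := W / ρ^(n-2) with hVm
  have hVm0 : 0 < Vm := by positivity
  set v : Eu n → ℝ := fun x => ∑ k ∈ G, newt (y k) x with hv
  have hvmax : ∀ x ∈ closure Ω, v x ≤ Vm := by
    intro x hx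
    exact vmax hn hρ hK hq hG1 (fun k hk => ⟨(hG3 k hk).1, (hG3 k hk).2.1⟩) (hfar x hx)
  have hy2 : ∀ k ∈ G, dist (y k) z ≤ 2 * ρ := by
    intro k hk
    refine (hG3 k hk).2.1.trans ?_
    have hkK : k < K := Finset.mem_range.1 (hG1 hk)
    have : ((k:ℝ)+1) / K ≤ 1 := by
      rw [div_le_one hK0]; exact_mod_cast hkK
    have := mul_le_mul_of_nonneg_left this hρ.le
    linarith
  set c := M / (2 * Vm) with hc
  have hc0 : 0 < c := by positivity
  set H : Eu n → ℝ := fun x => f x + c * v x + κ^2 * M * ‖x - x0‖^2 with hH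
  set D := closedBall x0 (9*ρ) ∩ closure Ω with hD
  have hDc : IsCompact D := (isCompact_closedBall x0 _).inter_right isClosed_closure
  have hx0cl : x0 ∈ closure Ω := subset_closure hx0
  have hvc : ∀ x ∈ closure Ω, ContinuousAt v x := by
    intro x hx
    simp only [hv]
    exact tendsto_finsetSum _ fun k hk => newt_cont (hneq x hx k hk)
  have hHc : ContinuousOn H D := by
    intro x hx
    apply ContinuousAt.continuousWithinAt
    have := hvc x hx.2
    simp only [hH]
    exact (hcont.continuousAt.add (this.const_mul c)).add (by fun_prop)
  obtain ⟨xs, hxs, hmax⟩ := hDc.exists_isMaxOn ⟨x0, mem_closedBall_self (by positivity), hx0cl⟩ hHc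
  have hmax0 : H x0 ≤ H xs := hmax (show x0 ∈ D from ⟨mem_closedBall_self (by positivity), hx0cl⟩)
  have hxsd : dist xs x0 ≤ 9 * ρ := hxs.1
  have hquad : κ^2 * M * ‖xs - x0‖^2 ≤ ε * M := by
    rw [← dist_eq_norm]
    have : (dist xs x0)^2 ≤ (9*ρ)^2 := by gcongr
    calc κ^2 * M * (dist xs x0)^2 ≤ κ^2 * M * (9*ρ)^2 := by gcongr
      _ = ε * M := by rw [hε]; ring
  have hv0 : ∀ x ∈ closure Ω, 0 ≤ v x := fun x hx => by
    simp only [hv]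
    apply Finset.sum_nonneg
    intro k _
    unfold newt
    positivity
  have hHx0 : f x0 + c * v x0 ≤ H xs := by
    refine le_trans (le_of_eq ?_) hmax0
    simp [hH]
  have hcV : c * Vm = M / 2 := by rw [hc]; field_simp
  have hxsΩ : xs ∈ Ω := by
    by_contra hcon
    have hf0 : f xs = 0 := by
      by_contra h
      exact hcon (hΩ.bd xs hxs.2 h)
    have h1 : c * v xs ≤ c * Vm := mul_le_mul_of_nonneg_left (hvmax xs hxs.2) hc0.le
    have h2 : 0 ≤ c * v x0 := mul_nonneg hc0.le (hv0 x0 hx0cl)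
    simp only [hH, hf0] at hHx0
    have : ε * M < 1/4 * M := mul_lt_mul_of_pos_right hε1 hM0
    linarith
  rcases hxsd.lt_or_eq with hlt | heq
  · -- interior maximum
    have hloc : IsLocalMax H xs := by
      have : ball x0 (9*ρ) ∩ Ω ∈ nhds xs := (isOpen_ball.inter hΩ.isOpen).mem_nhds ⟨hlt, hxsΩ⟩
      filter_upwards [this] with x hx
      exact hmax (show x ∈ D from ⟨ball_subset_closedBall hx.1, subset_closure hx.2⟩)
    have hL1 := hrep.hasLap xs
    have hL2 : HasLap v xs (∑ k ∈ G, (0:ℝ)) := HasLap.sum G fun k hk => hasLap_newton (y k) xs (hneq xs hxs.2 k hk)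
    have hL3 := (hasLap_sq x0 xs).smul_const (κ^2 * M)
    have := ((hL1.add (hL2.smul_const c)).add hL3).nonpos hloc
    simp only [Finset.sum_const_zero, mul_zero, add_zero] at this
    have h4 := hfM xs hxsΩ
    have h5 : κ^2 * f xs ≤ κ^2 * M := by gcongr
    have h6 : 0 < κ^2 * M := by positivity
    have h7 : κ^2 * M * 3 ≤ κ^2 * M * n := by gcongr
    linarith
  · -- maximum on the sphere
    have hvs : v xs ≤ G.card * ((6*ρ)^(n-2))⁻¹ := by
      calc v xs ≤ ∑ k ∈ G, ((6*ρ)^(n-2))⁻¹ := by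
            apply Finset.sum_le_sum
            intro k hk
            apply newt_le (by omega) (by positivity)
            have a := dist_triangle4 xs (y k) z x0
            have b := hy2 k hk
            linarith
        _ = _ := by simp
    have hvx0 : G.card * ((3*ρ)^(n-2))⁻¹ ≤ v x0 := by
      calc _ = ∑ k ∈ G, ((3*ρ)^(n-2))⁻¹ := by simp
        _ ≤ v x0 := by
            apply Finset.sum_le_sum
            intro k hk
            apply le_newt (by omega) (dist_pos.2 (hneq x0 hx0cl k hk))
            have a := dist_triangle x0 z (y k)
            have b := hy2 k hk
            rw [dist_comm x0 z, dist_comm z (y k)] at a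
            linarith
    have h6 : ((6*ρ)^(n-2))⁻¹ ≤ 1/2 * ((3*ρ)^(n-2))⁻¹ := by
      rw [show 6*ρ = 2 * (3 * ρ) by ring, mul_pow, mul_inv]
      gcongr
      rw [one_div]
      gcongr
      calc (2:ℝ) = 2^1 := by norm_num
        _ ≤ 2^(n-2) := pow_le_pow_right₀ (by norm_num) (by omega)
    set g3 := ((3*ρ)^(n-2))⁻¹ with hg3
    have hg30 : 0 < g3 := by positivity
    have hGK : (K:ℝ) / 2 ≤ G.card := by
      have : (K:ℝ) ≤ 2 * G.card := by exact_mod_cast hG2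
      linarith
    have hdiff : K / 4 * g3 ≤ v x0 - v xs := by
      have a : (G.card:ℝ) * ((6*ρ)^(n-2))⁻¹ ≤ G.card * (1/2 * g3) := by gcongr
      have b : (K:ℝ)/2 * (1/2 * g3) ≤ G.card * (1/2 * g3) := by gcongr
      linarith
    have hd2 := mul_le_mul_of_nonneg_left hdiff hc0.le
    have hf := hfM xs hxsΩ
    simp only [hH] at hHx0
    have hfin : c * (K / 4 * g3) ≤ 2 * ε * M := by linarith
    have e1 : c * (K / 4 * g3) = M * K / (8 * W * 3^(n-2)) := by
      rw [hc, hg3, hVm, mul_pow]; field_simp; ring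
    rw [e1, div_le_iff₀ (by positivity)] at hfin
    have e2 : 2 * ε * M * (8 * W * 3^(n-2)) = M * (1296 * 3^(n-2) * W * (κ*ρ)^2) := by
      rw [hε]; ring
    rw [e2] at hfin
    have := le_of_mul_le_mul_left hfin hM0
    linarith

theorem asymp (n : ℕ) (hn : 3 ≤ n) (A : ℝ) (hA : 0 < A) :
    ∀ᶠ l : ℝ in atTop, 1 ≤ l ∧ ∃ N q K : ℕ, 0 < N ∧ √l ≤ N ∧ 0 < q ∧ 0 < K ∧
      A * l ^ (-((1:ℝ)/2 + ((n:ℝ)-1)*((n:ℝ)-2)/(4*(n:ℝ)))) ≤ 1 ∧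
      √l * (A * l ^ (-((1:ℝ)/2 + ((n:ℝ)-1)*((n:ℝ)-2)/(4*(n:ℝ))))) ≤ 1/20 ∧
      4 * (n:ℝ)^(6*n*N) * ((6*n*N : ℕ):ℝ) * 2^(n+1) *
        (2 * ((6*n*N : ℕ):ℝ)/(A * l ^ (-((1:ℝ)/2 + ((n:ℝ)-1)*((n:ℝ)-2)/(4*(n:ℝ))))))^(6*n*N) < 2^(K*q) ∧
      1296 * 3^(n-2) * (3 * (8 * n * (K * q) : ℝ)^(n-2) + (K:ℝ)^(n-2+1)) *
        (√l * (A * l ^ (-((1:ℝ)/2 + ((n:ℝ)-1)*((n:ℝ)-2)/(4*(n:ℝ))))))^2 < K := by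
  have hn3 : (3:ℝ) ≤ n := by exact_mod_cast hn
  set γ : ℝ := ((n:ℝ)-1)*((n:ℝ)-2)/(4*(n:ℝ)) with hγ
  have hγ0 : 0 < γ := by
    have : 0 < (n:ℝ)-1 := by linarith
    have : 0 < (n:ℝ)-2 := by linarith
    positivity
  obtain ⟨b, hb0, hb1, hb2⟩ : ∃ b : ℝ, 0 < b ∧ 1/2 < b * ((n:ℝ)-1) ∧ b * ((n:ℝ)-2)^2 < 2 * γ := by
    have h1 : 0 < (n:ℝ)-1 := by linarith
    have h2 : 0 < (n:ℝ)-2 := by linarith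
    have hlt : 1/(2*((n:ℝ)-1)) < ((n:ℝ)-1)/(2*n*((n:ℝ)-2)) := by
      rw [div_lt_div_iff₀ (by positivity) (by positivity)]; nlinarith
    obtain ⟨b, hb1, hb2⟩ := exists_between hlt
    refine ⟨b, lt_trans (by positivity) hb1, ?_, ?_⟩
    · rw [div_lt_iff₀ (by positivity)] at hb1; linarith
    · rw [lt_div_iff₀ (by positivity)] at hb2
      have : 2 * γ = ((n:ℝ)-1)*((n:ℝ)-2)/(2*n) := by rw [hγ]; field_simp; ring
      rw [this, lt_div_iff₀ (by positivity)]
      nlinarith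
  set β : ℝ := 1/2 + γ with hβ
  have hβ0 : 0 < β := by positivity
  -- limits
  have L1 : Tendsto (fun l : ℝ => A * l ^ (-β)) atTop (nhds 0) := by
    simpa using (tendsto_rpow_neg_atTop hβ0).const_mul A
  have L2 : Tendsto (fun l : ℝ => A * l ^ (-γ)) atTop (nhds 0) := by
    simpa using (tendsto_rpow_neg_atTop hγ0).const_mul A
  have hη : 0 < 2 * γ - b * ((n:ℝ)-2)^2 := by linarith
  set C : ℝ := 1296 * 3^(n-2) * (3 * (8*n:ℝ)^(n-2) + 1) * 2^((n-2)^2) * A^2 with hC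
  have L3 : Tendsto (fun l : ℝ => C * l ^ (-(2 * γ - b * ((n:ℝ)-2)^2))) atTop (nhds 0) := by
    simpa using (tendsto_rpow_neg_atTop hη).const_mul C
  have L4 : Tendsto (fun l : ℝ => l ^ (1/2 : ℝ)) atTop atTop := tendsto_rpow_atTop (by norm_num)
  have hδ : 0 < b * ((n:ℝ)-1) - 1/2 := by linarith
  have hlog2 : 0 < log 2 := log_pos (by norm_num)
  have hc : 0 < log 2 / (2 * ((β+1) * (12*n))) := by positivity
  have L5 := (isLittleO_log_rpow_atTop hδ).bound hc
  filter_upwards [eventually_ge_atTop 2, L1.eventually (gt_mem_nhds one_pos),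
    L2.eventually (gt_mem_nhds (show (0:ℝ) < 1/20 by norm_num)), L3.eventually (gt_mem_nhds one_pos),
    L4.eventually (eventually_ge_atTop (96*n^2/A)), L5] with l h2 e1 e2 e3 e4 e5
  have hl0 : 0 < l := by linarith
  have hl1 : 1 ≤ l := by linarith
  set N := ⌈√l⌉₊ with hN
  set q := ⌈l^b⌉₊ with hq
  have hsq1 : 1 ≤ √l := by rw [one_le_sqrt]; exact hl1
  have hN0 : 0 < N := Nat.ceil_pos.2 (by linarith)
  have hlb1 : 1 ≤ l^b := one_le_rpow hl1 hb0.le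
  have hq0 : 0 < q := Nat.ceil_pos.2 (by linarith)
  have hqub : (q:ℝ) ≤ 2 * l^b := by
    have := Nat.ceil_lt_add_one (show 0 ≤ l^b by positivity)
    linarith
  have hqlb : l^b ≤ q := Nat.le_ceil _
  have hNub : (N:ℝ) ≤ 2 * √l := by
    have := Nat.ceil_lt_add_one (show 0 ≤ √l by positivity)
    linarith
  have hκρ : √l * (A * l^(-β)) = A * l^(-γ) := by
    rw [sqrt_eq_rpow, mul_left_comm, ← rpow_add hl0]
    congr 2; rw [hβ]; ring
  refine ⟨hl1, N, q, q^(n-2), hN0, Nat.le_ceil _, hq0, by positivity, e1.le, by rw [hκρ]; exact e2.le, ?_, ?_⟩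
  · set m := 6*n*N with hm
    have hm0 : 0 < m := by positivity
    have hmR : (0:ℝ) < m := by exact_mod_cast hm0
    have hmn : n + 3 ≤ m := by rw [hm]; nlinarith
    have hmub : (m:ℝ) ≤ 12 * n * √l := by
      rw [hm]; push_cast
      have : (6:ℝ) * n * N ≤ 6 * n * (2 * √l) := by gcongr
      linarith
    set ρ := A * l^(-β) with hρ
    have hρ0 : 0 < ρ := by positivity
    have s1 : 4 * (n:ℝ)^m * (m:ℝ) * 2^(n+1) * (2 * (m:ℝ)/ρ)^m ≤ (8 * n * m / ρ)^m := by
      have a1 : (m:ℝ) ≤ 2^m := by exact_mod_cast (Nat.lt_two_pow_self).le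
      have a2 : (2:ℝ)^(n+3) ≤ 2^m := pow_le_pow_right₀ (by norm_num) hmn
      calc 4 * (n:ℝ)^m * (m:ℝ) * 2^(n+1) * (2 * (m:ℝ)/ρ)^m
          = m * 2^(n+3) * ((n:ℝ)^m * (2 * (m:ℝ)/ρ)^m) := by rw [pow_add, pow_add]; ring
        _ ≤ 2^m * 2^m * ((n:ℝ)^m * (2 * (m:ℝ)/ρ)^m) := by gcongr
        _ = (8 * n * m / ρ)^m := by rw [← mul_pow, ← mul_pow, ← mul_pow]; congr 1; ring
    have s2 : 8 * n * m / ρ ≤ l ^ (β + 1) := by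
      rw [div_le_iff₀ hρ0, hρ]
      have : l^(β+1) * (A * l^(-β)) = A * l := by
        rw [mul_left_comm, ← rpow_add hl0]; norm_num
      rw [this]
      rw [div_le_iff₀ hA, ← sqrt_eq_rpow] at e4
      calc 8 * n * (m:ℝ) ≤ 8 * n * (12 * n * √l) := by gcongr
        _ = 96 * n^2 * √l := by ring
        _ ≤ √l * A * √l := by gcongr
        _ = A * (√l * √l) := by ring
        _ = A * l := by rw [mul_self_sqrt hl0.le]
    refine lt_of_le_of_lt s1 ?_
    refine lt_of_le_of_lt (pow_le_pow_left₀ (by positivity) s2 m) ?_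
    rw [← log_lt_log_iff (by positivity) (by positivity), log_pow, log_rpow hl0, log_pow]
    have hlog : log l ≤ log 2 / (2 * ((β+1) * (12*n))) * l^(b * ((n:ℝ)-1) - 1/2) := by
      have := (le_abs_self _).trans e5
      rwa [Real.norm_of_nonneg (by positivity)] at this
    have hlogpos : 0 ≤ log l := log_nonneg hl1
    have hKq : l^(b * ((n:ℝ)-1)) ≤ ((q^(n-2)*q : ℕ) : ℝ) := by
      have : q^(n-2)*q = q^(n-1) := by rw [← pow_succ]; congr 1; omega
      rw [this]; push_cast
      rw [show ((n:ℝ)-1) = ((n-1 : ℕ):ℝ) by push_cast [Nat.cast_sub (by omega : 1 ≤ n)]; ring, rpow_mul hl0.le, rpow_natCast]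
      gcongr
    have hhalf : √l * l^(b * ((n:ℝ)-1) - 1/2) = l^(b * ((n:ℝ)-1)) := by
      rw [sqrt_eq_rpow, ← rpow_add hl0]; congr 1; ring
    have hlp : 0 < l^(b * ((n:ℝ)-1)) := by positivity
    calc (m:ℝ) * ((β+1) * log l) ≤ (12 * n * √l) * ((β+1) * (log 2 / (2 * ((β+1) * (12*n))) * l^(b * ((n:ℝ)-1) - 1/2))) := by gcongr
      _ = (log 2 / 2) * (√l * l^(b * ((n:ℝ)-1) - 1/2)) := by field_simp
      _ = (log 2 / 2) * l^(b * ((n:ℝ)-1)) := by rw [hhalf]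
      _ < log 2 * l^(b * ((n:ℝ)-1)) := by gcongr; linarith
      _ ≤ log 2 * ((q^(n-2)*q : ℕ) : ℝ) := by gcongr
      _ = _ := by ring
  · rw [hκρ]
    have hqR : (0:ℝ) < q := by exact_mod_cast hq0
    push_cast
    have i1 : (3 * (8 * n * ((q:ℝ)^(n-2) * q))^(n-2) + ((q:ℝ)^(n-2))^(n-2+1)) =
        (3 * (8*n:ℝ)^(n-2) + 1) * (q:ℝ)^((n-2)^2) * (q:ℝ)^(n-2) := by
      have : ((q:ℝ)^(n-2))^(n-2+1) = (q:ℝ)^((n-2)^2) * (q:ℝ)^(n-2) := by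
        rw [← pow_mul, ← pow_add]; congr 1; ring
      have h' : ((q:ℝ)^(n-2) * q)^(n-2) = (q:ℝ)^((n-2)^2) * (q:ℝ)^(n-2) := by
        rw [mul_pow, ← pow_mul, ← pow_add]; congr 1; ring_nf
      rw [mul_pow, h', this]; ring
    rw [i1]
    have i2 : (q:ℝ)^((n-2)^2) ≤ 2^((n-2)^2) * l^(b * ((n:ℝ)-2)^2) := by
      calc (q:ℝ)^((n-2)^2) ≤ (2 * l^b)^((n-2)^2) := by gcongr
        _ = 2^((n-2)^2) * l^(b * ((n:ℝ)-2)^2) := by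
          rw [mul_pow]; congr 1
          rw [rpow_mul hl0.le, ← rpow_natCast (l^b)]
          congr 1
          push_cast [Nat.cast_sub (by omega : 2 ≤ n)]; ring
    have i3 : (A * l^(-γ))^2 = A^2 * l^(-(2*γ)) := by
      rw [mul_pow, ← rpow_natCast (l^(-γ)), ← rpow_mul hl0.le]; congr 2; push_cast; ring
    have i4 : l^(b * ((n:ℝ)-2)^2) * l^(-(2*γ)) = l ^ (-(2 * γ - b * ((n:ℝ)-2)^2)) := by
      rw [← rpow_add hl0]; congr 1; ring
    calc 1296 * 3^(n-2) * ((3 * (8*n:ℝ)^(n-2) + 1) * (q:ℝ)^((n-2)^2) * (q:ℝ)^(n-2)) * (A * l^(-γ))^2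
        = (1296 * 3^(n-2) * (3 * (8*n:ℝ)^(n-2) + 1) * (A^2 * l^(-(2*γ)))) * (q:ℝ)^((n-2)^2) * (q:ℝ)^(n-2) := by rw [i3]; ring
      _ ≤ (1296 * 3^(n-2) * (3 * (8*n:ℝ)^(n-2) + 1) * (A^2 * l^(-(2*γ)))) * (2^((n-2)^2) * l^(b * ((n:ℝ)-2)^2)) * (q:ℝ)^(n-2) := by gcongr
      _ = (C * (l^(b * ((n:ℝ)-2)^2) * l^(-(2*γ)))) * (q:ℝ)^(n-2) := by rw [hC]; ring
      _ < 1 * (q:ℝ)^(n-2) := by rw [i4]; gcongr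
      _ = (q:ℝ)^(n-2) := one_mul _

theorem qe_key (n : ℕ) (hn : 3 ≤ n) (ψ : Eu n → ℝ) (lam ρ : ℝ) (hlam : 1 ≤ lam)
    (hsmooth : ContDiff ℝ (⊤ : ℕ∞) ψ) (hper : ZnPeriodic n ψ)
    (heig : ∀ x, lap n ψ x = -lam * ψ x) (hnorm : (∫ x in fundDom n, (ψ x)^2) = 1)
    (hρ : 0 < ρ) (N q K : ℕ) (hN : 0 < N) (hκN : √lam ≤ N) (hq : 0 < q) (hK : 0 < K) (hρ1 : ρ ≤ 1)
    (hκρ : √lam * ρ ≤ 1/20)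
    (hQ : 4 * (n:ℝ)^(6*n*N) * ((6*n*N : ℕ):ℝ) * 2^(n+1) * (2 * ((6*n*N : ℕ):ℝ)/ρ)^(6*n*N) < 2^(K*q))
    (hW : 1296 * 3^(n-2) * (3 * (8 * n * (K * q) : ℝ)^(n-2) + (K:ℝ)^(n-2+1)) * (√lam*ρ)^2 < K) :
    ρ ≤ sInf (innerRadius '' {Ω | IsNodalDomain ψ Ω}) := by
  have hcont : Continuous ψ := hsmooth.continuous
  have hκ : 0 < √lam := sqrt_pos.2 (by linarith)
  have hne : ∃ x, ψ x ≠ 0 := by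
    by_contra! h
    simp [h] at hnorm
  obtain ⟨x1, hx1⟩ := per_max (f := fun x => |ψ x|) (fun x v => by
    have := hper x v
    simp only at this ⊢
    rw [this]) hcont.abs
  obtain ⟨x2, hx2⟩ := hne
  have hS : 0 < |ψ x1| := lt_of_lt_of_le (abs_pos.2 hx2) (hx1 x2)
  have hrep := cosRep_of_eig n ψ lam |ψ x1| (by linarith) hsmooth hper heig hx1
  apply le_csInf
  · exact ⟨_, _, ⟨x2, hx2, rfl⟩, rfl⟩
  · rintro _ ⟨Ω, hΩ, rfl⟩
    obtain ⟨σ, hσ, hpos⟩ := nodal_pos hcont hΩ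
    have hσa : |σ| = 1 := by rcases hσ with h | h <;> simp [h]
    have hrep' := hrep.neg' hσ
    have hper' : ZnPeriodic n (fun x => σ * ψ x) := fun x v => by
      have := hper x v
      simp only at this ⊢
      rw [this]
    obtain ⟨x0, hx0⟩ := barrier hn hκ hS hrep' hper' (fun x => by rw [abs_mul, hσa, one_mul]; exact hx1 x)
      (x1 := x1) (by rw [abs_mul, hσa, one_mul]) hpos hρ hρ1 hκρ N hN hκN q K hq hK hQ hW
    apply le_csSup
    · refine ⟨n, ?_⟩
      rintro r ⟨-, c, hc⟩
      exact inner_bdd hκ hrep' hper' (fun x hx => hpos.pos x (hc hx))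
    · exact ⟨hρ, x0, hx0⟩

theorem qe_inner_radius_superpolynomial
    (n : ℕ) (hn : 3 ≤ n)
    (ψ : ℕ → EuclideanSpace ℝ (Fin n) → ℝ) (lam : ℕ → ℝ)
    (hsmooth : ∀ j, ContDiff ℝ (⊤ : ℕ∞) (ψ j)) (hper : ∀ j, ZnPeriodic n (ψ j))
    (heig : ∀ j x, lap n (ψ j) x = -(lam j) * ψ j x)
    (hnorm : ∀ j, (∫ x in fundDom n, (ψ j x)^2) = 1)
    (hlam : Tendsto lam atTop atTop)
    (R₀ : ℝ) (hR₀ : 0 < R₀)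
    (hequi : ∀ r : ℝ, 0 < r → r < R₀ → ∀ x : EuclideanSpace ℝ (Fin n),
      Tendsto (fun j => ∫ y in Metric.ball x r, (ψ j y)^2) atTop
        (nhds (volume (Metric.ball x r)).toReal)) :
    Tendsto (fun j =>
        lam j ^ ((1:ℝ)/2 + ((n:ℝ)-1)*((n:ℝ)-2)/(4*(n:ℝ))) *
          sInf (innerRadius '' {Ω | IsNodalDomain (ψ j) Ω}))
      atTop atTop := by
  rw [Filter.tendsto_atTop]
  intro A0
  set A := max A0 1 with hA
  have hA0 : 0 < A := lt_of_lt_of_le one_pos (le_max_right _ _)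
  filter_upwards [hlam.eventually (asymp n hn A hA0)] with j hj
  obtain ⟨hl1, N, q, K, h1, h2, h3, h4, h5, h6, h7, h8⟩ := hj
  have hl0 : 0 < lam j := by linarith
  have key := qe_key n hn (ψ j) (lam j) _ hl1 (hsmooth j) (hper j) (heig j) (hnorm j)
    (mul_pos hA0 (rpow_pos_of_pos hl0 _)) N q K h1 h2 h3 h4 h5 h6 h7 h8
  refine (le_max_left A0 1).trans ?_
  rw [← hA]
  refine le_trans (le_of_eq ?_) (mul_le_mul_of_nonneg_left key (rpow_nonneg hl0.le _))
  rw [mul_left_comm, ← rpow_add hl0, add_neg_cancel, rpow_zero, mul_one]
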